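/- Comparison of derivatives of the Poisson integral and the Poisson-type integral: Let 1 < p < ∞ and f ∈ L^p(ℝ^d; ℝ^d). Set F = (f, 0) : ℝ^d → ℝ^{d+1}, let u(x,t) = (p_t ∗ F)(x) and U(x,t) = (ℙ_t ∗ F)(x). Then there exists a constant C = C(d,p) > 0 such that for every t > 0: ‖∂_t u(·,t)‖_{L^p(ℝ^d)} ≤ C ‖∂_t U(·,t)‖_{L^p(ℝ^d)}, and for each k = 1, …, d: ‖∂_{x_k} u(·,t)‖_{L^p(ℝ^d)} ≤ C ‖∂_{x_k} U(·,t)‖_{L^p(ℝ^d)}. -/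

import Mathlib

open MeasureTheory Filter Set
open scoped ENNReal NNReal Topology

noncomputable section

abbrev Ed (d : ℕ) : Type := EuclideanSpace ℝ (Fin d)

/-- The surface measure `ω_d` of the unit sphere in `ℝ^{d+1}`. -/
def sphereVol (d : ℕ) : ℝ :=
  ((d : ℝ) + 1) * (volume (Metric.ball (0 : EuclideanSpace ℝ (Fin (d+1))) 1)).toReal

/-- The Poisson kernel `p_t(x)` for the upper half-space `ℝ^d × (0,∞)`. -/
def halfSpacePoissonKernel (d : ℕ) (t : ℝ) (x : Ed d) : ℝ :=
  (2 / sphereVol d) * t / (‖x‖ ^ 2 + t ^ 2) ^ (((d : ℝ) + 1) / 2)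

/-- The (componentwise) Poisson integral `u(x,t) = (p_t ∗ f)(x)` of a vector field. -/
def poissonInt (d m : ℕ) (f : Ed d → Ed m) (x : Ed d) (t : ℝ) : Ed m :=
  ∫ y, halfSpacePoissonKernel d t y • f (x - y)

/-- The vector `(x, t) ∈ ℝ^{d+1}`. -/
def snocVec (d : ℕ) (x : Ed d) (t : ℝ) : Fin (d + 1) → ℝ := Fin.snoc (fun i => x i) t

/-- The entries `𝔭_t^{jk}(x)` of the Poisson-type matrix kernel `ℙ_t`. -/
def pEntry (d : ℕ) (t : ℝ) (j k : Fin (d + 1)) (x : Ed d) : ℝ :=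
  (2 * ((d : ℝ) + 1) / sphereVol d) * t * snocVec d x t j *
    snocVec d x t k / (‖x‖ ^ 2 + t ^ 2) ^ (((d : ℝ) + 3) / 2)

/-- The Poisson-type integral `U(x,t) = (ℙ_t ∗ F)(x)`, the convolution taken in the sense of
matrix–vector multiplication. -/
def pConv (d : ℕ) (t : ℝ) (F : Ed d → Ed (d + 1)) (x : Ed d) : Ed (d + 1) :=
  (EuclideanSpace.equiv (Fin (d + 1)) ℝ).symm
    (fun i => ∫ y, ∑ j, pEntry d t i j y * F (x - y) j)

/-- The field `F = (f, 0) : ℝ^d → ℝ^{d+1}` obtained by appending a zero component. -/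
def appendZero (d : ℕ) (f : Ed d → Ed d) : Ed d → Ed (d + 1) :=
  fun y => (EuclideanSpace.equiv (Fin (d + 1)) ℝ).symm (Fin.snoc (fun i => f y i) 0)

/-!
Let `K_i(w) = w_i / |w|^(d+1)` on `ℝ^(d+1)`, so that `K_{d+1}` is the Poisson kernel up to a
constant and `K_1, …, K_d` are the conjugate Poisson kernels. Differentiating `K_i` gives
`𝔭^{ik} = c (δ_{ik} K_{d+1} - t ∂_k K_i)` with `c = 2 / ω_d`, hence `U_i = u_i - c t div (K_i ∗ f)`.
Since `u_{d+1} = 0`, the last component of `U` is `-c t div (K_{d+1} ∗ f)`. For `i ≤ d`, the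
function `K_i` is up to a constant the `i`-th Riesz transform of `K_{d+1}`, so `u_i - U_i` is a
Riesz transform of `U_{d+1}`, and the same holds after any derivative in `(x, t)`; the theorem
follows from the `L^p` boundedness of the Riesz transforms.

No singular integral is needed: the Riesz transform is the limit `s → 0` of the convolution with
the conjugate Poisson kernel `K_i(·, s)`, which by the semigroup identity
`K_i(·, s) ∗ K_{d+1}(·, t) = const · K_i(·, s + t)` only raises the height in the half-space.
The uniform `L^p` bound for these convolutions is reduced to dimension one by averaging over the
lines through a point, and there is M. Riesz's theorem, proved by applying Cauchy's theorem to the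
`p`-th power of the Cauchy transform of a nonnegative function for `p ≤ 2`, and by duality for
`p ≥ 2`.
-/

open Module (finrank)
open scoped ContDiff

section HomogeneousKernel

/-- A kernel that is smooth away from the origin and positively homogeneous of degree `-n`. The
kernels of the half-space `E × (0, ∞)` (Poisson, conjugate Poisson and their derivatives) are of
this kind on `E × ℝ`; there is no condition on the value at the origin. -/
structure IsHomogeneousKernel {V : Type*} [NormedAddCommGroup V] [NormedSpace ℝ V] (n : ℕ)
    (Ψ : V → ℝ) : Prop where
  contDiffOn : ContDiffOn ℝ ∞ Ψ {0}ᶜ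
  pow_mul_smul : ∀ l : ℝ, 0 < l → ∀ z ≠ 0, l ^ n * Ψ (l • z) = Ψ z

variable {V : Type*} [NormedAddCommGroup V] [NormedSpace ℝ V] {n : ℕ} {Ψ : V → ℝ}

lemma exists_norm_mul_pow_le_of_homogeneous [FiniteDimensional ℝ V] {F : Type*}
    [NormedAddCommGroup F] [NormedSpace ℝ F] {G : V → F} (hG : ContinuousOn G {0}ᶜ)
    (hom : ∀ l : ℝ, 0 < l → ∀ z ≠ 0, l ^ n • G (l • z) = G z) :
    ∃ C, 0 ≤ C ∧ ∀ z ≠ 0, ‖G z‖ * ‖z‖ ^ n ≤ C := by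
  have hsphere : ContinuousOn G (Metric.sphere 0 1) :=
    hG.mono fun z hz => Metric.ne_of_mem_sphere hz one_ne_zero
  obtain ⟨C, hC⟩ := (isCompact_sphere (0 : V) 1).exists_bound_of_continuousOn hsphere
  refine ⟨|C|, abs_nonneg _, fun z hz => ?_⟩
  have hz0 : 0 < ‖z‖ := norm_pos_iff.2 hz
  have hunit : ‖G (‖z‖⁻¹ • z)‖ ≤ C := hC _ (by simp [norm_smul, hz0.ne'])
  rw [← hom ‖z‖⁻¹ (inv_pos.2 hz0) z hz, norm_smul, norm_pow, norm_inv, norm_norm, mul_right_comm,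
    ← mul_pow, inv_mul_cancel₀ hz0.ne', one_pow, one_mul]
  exact hunit.trans (le_abs_self C)

namespace IsHomogeneousKernel

lemma differentiableAt (h : IsHomogeneousKernel n Ψ) {z : V} (hz : z ≠ 0) :
    DifferentiableAt ℝ Ψ z :=
  (h.contDiffOn.contDiffAt (isOpen_compl_singleton.mem_nhds hz)).differentiableAt (by simp)

lemma contDiffOn_fderiv (h : IsHomogeneousKernel n Ψ) : ContDiffOn ℝ ∞ (fderiv ℝ Ψ) {0}ᶜ :=
  h.contDiffOn.fderiv_of_isOpen isOpen_compl_singleton (by simp)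

lemma pow_smul_fderiv (h : IsHomogeneousKernel n Ψ) {l : ℝ} (hl : 0 < l) {z : V} (hz : z ≠ 0) :
    l ^ (n + 1) • fderiv ℝ Ψ (l • z) = fderiv ℝ Ψ z := by
  have hscaled : HasFDerivAt (fun z => l ^ n * Ψ (l • z))
      (l ^ n • (fderiv ℝ Ψ (l • z)).comp (l • ContinuousLinearMap.id ℝ V)) z :=
    ((h.differentiableAt (smul_ne_zero hl.ne' hz)).hasFDerivAt.comp z
      ((hasFDerivAt_id z).const_smul l)).const_mul _
  have heq : Ψ =ᶠ[𝓝 z] fun z => l ^ n * Ψ (l • z) := by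
    filter_upwards [isOpen_compl_singleton.mem_nhds hz] with w hw
    exact (h.pow_mul_smul l hl w hw).symm
  rw [(hscaled.congr_of_eventuallyEq heq).fderiv]
  ext e
  simp [pow_succ, mul_assoc]

lemma fderiv_apply (h : IsHomogeneousKernel n Ψ) (e : V) :
    IsHomogeneousKernel (n + 1) (fun z => fderiv ℝ Ψ z e) where
  contDiffOn := h.contDiffOn_fderiv.clm_apply contDiffOn_const
  pow_mul_smul l hl z hz := by
    simpa using congrArg (fun L : V →L[ℝ] ℝ => L e) (h.pow_smul_fderiv hl hz)

lemma clm_mul (h : IsHomogeneousKernel (n + 1) Ψ) (L : V →L[ℝ] ℝ) :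
    IsHomogeneousKernel n (fun z => L z * Ψ z) where
  contDiffOn := L.contDiff.contDiffOn.mul h.contDiffOn
  pow_mul_smul l hl z hz := by
    rw [← h.pow_mul_smul l hl z hz, map_smul, smul_eq_mul]
    ring

lemma exists_abs_mul_pow_le [FiniteDimensional ℝ V] (h : IsHomogeneousKernel n Ψ) :
    ∃ C, 0 ≤ C ∧ ∀ z ≠ 0, ‖Ψ z‖ * ‖z‖ ^ n ≤ C :=
  exists_norm_mul_pow_le_of_homogeneous h.contDiffOn.continuousOn h.pow_mul_smul

lemma exists_norm_fderiv_mul_pow_le [FiniteDimensional ℝ V] (h : IsHomogeneousKernel n Ψ) :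
    ∃ C, 0 ≤ C ∧ ∀ z ≠ 0, ‖fderiv ℝ Ψ z‖ * ‖z‖ ^ (n + 1) ≤ C :=
  exists_norm_mul_pow_le_of_homogeneous h.contDiffOn_fderiv.continuousOn
    fun _ hl _ hz => h.pow_smul_fderiv hl hz

end IsHomogeneousKernel

end HomogeneousKernel

section HalfSpace

variable {E : Type*} [NormedAddCommGroup E] {n : ℕ}

lemma ne_zero_of_snd_pos {z : E × ℝ} (hz : 0 < z.2) : z ≠ 0 := by
  rintro rfl
  simp at hz

lemma sub_prodMk_zero_ne_zero {z : E × ℝ} (hz : 0 < z.2) (y : E) : z - (y, 0) ≠ 0 :=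
  ne_zero_of_snd_pos (by simpa using hz)

lemma eventually_snd_pos {z : E × ℝ} (hz : 0 < z.2) : ∀ᶠ w in 𝓝 z, 0 < w.2 :=
  (isOpen_lt continuous_const continuous_snd).mem_nhds hz

lemma snd_pos_of_mem_ball {z w : E × ℝ} (hw : w ∈ Metric.ball z (z.2 / 2)) : z.2 / 2 < w.2 := by
  have hdist : |w.2 - z.2| < z.2 / 2 := (norm_snd_le (w - z)).trans_lt (mem_ball_iff_norm.1 hw)
  linarith [(abs_lt.1 hdist).1]

lemma one_add_norm_le_norm_sub {z w : E × ℝ} (hw : w ∈ Metric.ball z (z.2 / 2)) (y : E) :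
    min 1 z.2 / 4 * (1 + ‖z.1 - y‖) ≤ ‖w - (y, 0)‖ := by
  have hheight : w.2 ≤ ‖w - (y, 0)‖ := by
    simpa using (le_abs_self _).trans (norm_snd_le (w - (y, (0 : ℝ))))
  have hbase : ‖w.1 - y‖ ≤ ‖w - (y, 0)‖ := norm_fst_le (w - (y, (0 : ℝ)))
  have hdist : ‖w.1 - z.1‖ < z.2 / 2 := (norm_fst_le (w - z)).trans_lt (mem_ball_iff_norm.1 hw)
  have htriangle : ‖z.1 - y‖ ≤ ‖w.1 - y‖ + ‖w.1 - z.1‖ := by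
    simpa using norm_sub_le (w.1 - y) (w.1 - z.1)
  have := snd_pos_of_mem_ball hw
  nlinarith [min_le_left 1 z.2, min_le_right 1 z.2, norm_nonneg (z.1 - y),
    norm_nonneg (w.1 - z.1), lt_min one_pos (by linarith [norm_nonneg (w.1 - z.1)] : 0 < z.2)]

lemma exists_norm_sub_le_inv_pow {F : Type*} [NormedAddCommGroup F] {G : E × ℝ → F}
    (hG : ∃ C, 0 ≤ C ∧ ∀ z ≠ 0, ‖G z‖ * ‖z‖ ^ n ≤ C) {z : E × ℝ} (hz : 0 < z.2) :
    ∃ C, 0 ≤ C ∧ ∀ w ∈ Metric.ball z (z.2 / 2), ∀ y : E,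
      ‖G (w - (y, 0))‖ ≤ C * ((1 + ‖z.1 - y‖) ^ n)⁻¹ := by
  obtain ⟨C, hC0, hC⟩ := hG
  have : 0 < min 1 z.2 / 4 := div_pos (lt_min one_pos hz) four_pos
  refine ⟨C * ((min 1 z.2 / 4) ^ n)⁻¹, by positivity, fun w hw y => ?_⟩
  have hlower : (min 1 z.2 / 4) ^ n * (1 + ‖z.1 - y‖) ^ n ≤ ‖w - (y, 0)‖ ^ n := by
    rw [← mul_pow]
    gcongr
    exact one_add_norm_le_norm_sub hw y
  have hne : w - (y, 0) ≠ 0 :=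
    sub_prodMk_zero_ne_zero (by linarith [snd_pos_of_mem_ball hw]) y
  rw [mul_assoc, ← mul_inv, ← div_eq_mul_inv, le_div_iff₀ (by positivity)]
  exact (mul_le_mul_of_nonneg_left hlower (norm_nonneg _)).trans (hC _ hne)

variable [NormedSpace ℝ E] {Ψ : E × ℝ → ℝ}

namespace IsHomogeneousKernel

lemma continuous_sub (h : IsHomogeneousKernel n Ψ) {z : E × ℝ} (hz : 0 < z.2) :
    Continuous fun y : E => Ψ (z - (y, 0)) :=
  h.contDiffOn.continuousOn.comp_continuous (by fun_prop) (sub_prodMk_zero_ne_zero hz)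

lemma continuous_slice (h : IsHomogeneousKernel n Ψ) {t : ℝ} (ht : 0 < t) :
    Continuous fun y : E => Ψ (y, t) :=
  h.contDiffOn.continuousOn.comp_continuous (by fun_prop) fun _ => ne_zero_of_snd_pos ht

lemma exists_abs_le_div_pow [FiniteDimensional ℝ E] (h : IsHomogeneousKernel n Ψ) :
    ∃ C, 0 ≤ C ∧ ∀ z : E × ℝ, 0 < z.2 → |Ψ z| ≤ C / z.2 ^ n := by
  obtain ⟨C, hC0, hC⟩ := h.exists_abs_mul_pow_le
  refine ⟨C, hC0, fun z hz => ?_⟩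
  rw [le_div_iff₀ (by positivity)]
  refine le_trans ?_ (hC z (ne_zero_of_snd_pos hz))
  gcongr
  · exact le_rfl
  · exact (le_abs_self _).trans (norm_snd_le z)

lemma tendsto_atTop [FiniteDimensional ℝ E] (h : IsHomogeneousKernel n Ψ) (hn : n ≠ 0) (x : E) :
    Tendsto (fun s => Ψ (x, s)) atTop (𝓝 0) := by
  obtain ⟨C, -, hC⟩ := h.exists_abs_le_div_pow
  exact squeeze_zero_norm' ((eventually_gt_atTop 0).mono fun s hs => hC (x, s) hs)
    (tendsto_const_nhds.div_atTop (tendsto_pow_atTop hn))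

end IsHomogeneousKernel

end HalfSpace

section KernelConv

variable {E : Type*} [NormedAddCommGroup E] [NormedSpace ℝ E] [FiniteDimensional ℝ E]
  [MeasureSpace E] [BorelSpace E] [(volume : Measure E).IsAddHaarMeasure]
  {n : ℕ} {Ψ : E × ℝ → ℝ} {f : E → ℝ} {p q : ℝ}

lemma memLp_inv_one_add_norm_pow (hq : 1 ≤ q) (hn : (finrank ℝ E : ℝ) < n * q) :
    MemLp (fun v : E => ((1 + ‖v‖) ^ n)⁻¹) (ENNReal.ofReal q) volume := by
  have hcont : Continuous fun v : E => ((1 + ‖v‖) ^ n)⁻¹ :=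
    Continuous.inv₀ (by fun_prop) fun v => by positivity
  rw [← integrable_norm_rpow_iff hcont.aestronglyMeasurable (by simp; linarith) (by simp)]
  refine (integrable_one_add_norm (E := E) (μ := volume) hn).congr (.of_forall fun v => ?_)
  have hv : 0 < 1 + ‖v‖ := by positivity
  simp only [ENNReal.toReal_ofReal (zero_le_one.trans hq), norm_inv, norm_pow,
    Real.norm_of_nonneg hv.le]
  rw [← Real.rpow_natCast, ← Real.rpow_neg hv.le, ← Real.rpow_mul hv.le, neg_mul]

lemma integrable_inv_one_add_norm_pow_mul (hpq : p.HolderConjugate q)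
    (hn : (finrank ℝ E : ℝ) < n * q) (hf : MemLp f (ENNReal.ofReal p) volume) (x : E) :
    Integrable (fun y => ((1 + ‖x - y‖) ^ n)⁻¹ * f y) volume := by
  have := hpq.symm.ennrealOfReal
  exact ((memLp_inv_one_add_norm_pow hpq.symm.lt.le hn).comp_measurePreserving
    (Measure.measurePreserving_sub_left volume x)).integrable_mul hf

/-- The convolution `(Ψ(·, t) ∗ f)(x)` of a slice of a half-space kernel with a function of the
base space, as a function of `z = (x, t)`; it is written through `z - (y, 0)` so that derivatives
in `z` fall on the kernel. -/
def kernelConv (Ψ : E × ℝ → ℝ) (f : E → ℝ) (z : E × ℝ) : ℝ :=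
  ∫ y, Ψ (z - (y, 0)) * f y

lemma kernelConv_eq_integral_slice (Ψ : E × ℝ → ℝ) (f : E → ℝ) (z : E × ℝ) :
    kernelConv Ψ f z = ∫ y, Ψ (y, z.2) * f (z.1 - y) := by
  rw [kernelConv, ← integral_sub_left_eq_self (fun y => Ψ (z - (y, 0)) * f y) volume z.1]
  simp [Prod.sub_def]

namespace IsHomogeneousKernel

lemma memLp_slice (h : IsHomogeneousKernel n Ψ) {t : ℝ} (ht : 0 < t) (hq : 1 ≤ q)
    (hn : (finrank ℝ E : ℝ) < n * q) :
    MemLp (fun y : E => Ψ (y, t)) (ENNReal.ofReal q) volume := by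
  obtain ⟨C, -, hC⟩ := exists_norm_sub_le_inv_pow h.exists_abs_mul_pow_le (z := ((0 : E), t)) ht
  refine ((memLp_inv_one_add_norm_pow hq hn).const_mul C).mono
    (h.continuous_slice ht).aestronglyMeasurable (.of_forall fun y => ?_)
  simpa using (hC (0, t) (Metric.mem_ball_self (half_pos ht)) (-y)).trans (le_abs_self _)

lemma integrable_slice (h : IsHomogeneousKernel n Ψ) {t : ℝ} (ht : 0 < t)
    (hn : finrank ℝ E < n) : Integrable (fun y : E => Ψ (y, t)) volume := by
  rw [← memLp_one_iff_integrable, ← ENNReal.ofReal_one]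
  exact h.memLp_slice ht le_rfl (by simpa using hn)

lemma integrable_mul (h : IsHomogeneousKernel n Ψ) (hpq : p.HolderConjugate q)
    (hn : (finrank ℝ E : ℝ) < n * q) (hf : MemLp f (ENNReal.ofReal p) volume) {z : E × ℝ}
    (hz : 0 < z.2) : Integrable (fun y => Ψ (z - (y, 0)) * f y) volume := by
  have := hpq.symm.ennrealOfReal
  have hslice := (h.memLp_slice hz hpq.symm.lt.le hn).comp_measurePreserving
    (Measure.measurePreserving_sub_left volume z.1)
  refine (hslice.integrable_mul hf).congr (.of_forall fun y => ?_)
  simp [Prod.sub_def]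

lemma integrable_slice_mul (h : IsHomogeneousKernel n Ψ) (hpq : p.HolderConjugate q)
    (hn : (finrank ℝ E : ℝ) < n * q) (hf : MemLp f (ENNReal.ofReal p) volume) {t : ℝ}
    (ht : 0 < t) (x : E) : Integrable (fun y => Ψ (y, t) * f (x - y)) volume := by
  simpa [Prod.sub_def] using
    (h.integrable_mul hpq hn hf (z := (x, t)) ht).comp_sub_left x

lemma hasFDerivAt_kernelConv (h : IsHomogeneousKernel n Ψ) (hpq : p.HolderConjugate q)
    (hn : (finrank ℝ E : ℝ) < n * q) (hf : MemLp f (ENNReal.ofReal p) volume) {z : E × ℝ}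
    (hz : 0 < z.2) :
    Integrable (fun y => f y • fderiv ℝ Ψ (z - (y, 0))) volume ∧
      HasFDerivAt (kernelConv Ψ f) (∫ y, f y • fderiv ℝ Ψ (z - (y, 0))) z := by
  obtain ⟨C, _, hC⟩ := exists_norm_sub_le_inv_pow h.exists_norm_fderiv_mul_pow_le hz
  have hn' : (finrank ℝ E : ℝ) < (n + 1 : ℕ) * q := by
    push_cast
    linarith [hpq.symm.pos]
  have hbound : ∀ w ∈ Metric.ball z (z.2 / 2), ∀ y, ‖f y • fderiv ℝ Ψ (w - (y, 0))‖
      ≤ C * ‖((1 + ‖z.1 - y‖) ^ (n + 1))⁻¹ * f y‖ := fun w hw y => by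
    rw [norm_smul, norm_mul, norm_inv, norm_pow,
      Real.norm_of_nonneg (by positivity : 0 ≤ 1 + ‖z.1 - y‖), mul_comm ‖f y‖, ← mul_assoc]
    gcongr
    exact hC w hw y
  have hbound_int := (integrable_inv_one_add_norm_pow_mul hpq hn' hf z.1).norm.const_mul C
  have hzball := Metric.mem_ball_self (x := z) (half_pos hz)
  have hnhds := Metric.ball_mem_nhds z (half_pos hz)
  have hmeas : AEStronglyMeasurable (fun y => f y • fderiv ℝ Ψ (z - (y, 0))) volume :=
    hf.1.smul (h.contDiffOn_fderiv.continuousOn.comp_continuous (by fun_prop)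
      (sub_prodMk_zero_ne_zero hz)).aestronglyMeasurable
  refine ⟨hbound_int.mono' hmeas (.of_forall (hbound z hzball)),
    hasFDerivAt_integral_of_dominated_of_fderiv_le hnhds ?_ (h.integrable_mul hpq hn hf hz) hmeas
      (.of_forall fun y w hw => hbound w hw y) hbound_int (.of_forall fun y w hw => ?_)⟩
  · filter_upwards [eventually_snd_pos hz] with w hw
    exact (h.continuous_sub hw).aestronglyMeasurable.mul hf.1
  · have hw0 : 0 < w.2 := by linarith [snd_pos_of_mem_ball hw]
    exact ((h.differentiableAt (sub_prodMk_zero_ne_zero hw0 y)).hasFDerivAt.comp w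
      ((hasFDerivAt_id w).sub_const (y, (0 : ℝ)))).mul_const (f y)

lemma differentiableAt_kernelConv (h : IsHomogeneousKernel n Ψ) (hpq : p.HolderConjugate q)
    (hn : (finrank ℝ E : ℝ) < n * q) (hf : MemLp f (ENNReal.ofReal p) volume) {z : E × ℝ}
    (hz : 0 < z.2) : DifferentiableAt ℝ (kernelConv Ψ f) z :=
  (h.hasFDerivAt_kernelConv hpq hn hf hz).2.differentiableAt

lemma fderiv_kernelConv (h : IsHomogeneousKernel n Ψ) (hpq : p.HolderConjugate q)
    (hn : (finrank ℝ E : ℝ) < n * q) (hf : MemLp f (ENNReal.ofReal p) volume) {z : E × ℝ}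
    (hz : 0 < z.2) (e : E × ℝ) :
    fderiv ℝ (kernelConv Ψ f) z e = kernelConv (fun w => fderiv ℝ Ψ w e) f z := by
  obtain ⟨hint, hderiv⟩ := h.hasFDerivAt_kernelConv hpq hn hf hz
  rw [hderiv.fderiv, ContinuousLinearMap.integral_apply hint]
  simp [kernelConv, mul_comm]

lemma continuous_kernelConv_slice (h : IsHomogeneousKernel n Ψ) (hpq : p.HolderConjugate q)
    (hn : (finrank ℝ E : ℝ) < n * q) (hf : MemLp f (ENNReal.ofReal p) volume) {t : ℝ}
    (ht : 0 < t) : Continuous fun x => kernelConv Ψ f (x, t) :=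
  continuous_iff_continuousAt.2 fun x =>
    ContinuousAt.comp (f := fun x : E => (x, t))
      (h.differentiableAt_kernelConv hpq hn hf (z := (x, t)) ht).continuousAt (by fun_prop)

lemma tendsto_kernelConv_vertical (h : IsHomogeneousKernel n Ψ) (hpq : p.HolderConjugate q)
    (hn : (finrank ℝ E : ℝ) < n * q) (hf : MemLp f (ENNReal.ofReal p) volume) (x : E) {t : ℝ}
    (ht : 0 < t) :
    Tendsto (fun s => kernelConv Ψ f (x, t + s)) (𝓝[>] 0) (𝓝 (kernelConv Ψ f (x, t))) := by
  have hshift : Tendsto (fun s : ℝ => (x, t + s)) (𝓝[>] 0) (𝓝 (x, t)) := by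
    have : Continuous fun s : ℝ => (x, t + s) := by fun_prop
    simpa using (this.tendsto 0).mono_left nhdsWithin_le_nhds
  exact (h.differentiableAt_kernelConv hpq hn hf (z := (x, t)) ht).continuousAt.tendsto.comp hshift

end IsHomogeneousKernel

end KernelConv

lemma IsHomogeneousKernel.tendsto_kernelConv_atTop {E : Type*} [NormedAddCommGroup E]
    [NormedSpace ℝ E] [FiniteDimensional ℝ E] [MeasureSpace E] {n : ℕ} {Ψ : E × ℝ → ℝ} {f : E → ℝ}
    (h : IsHomogeneousKernel n Ψ) (hn : n ≠ 0) (hf : Integrable f volume) (x : E) :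
    Tendsto (fun s => kernelConv Ψ f (x, s)) atTop (𝓝 0) := by
  obtain ⟨C, -, hC⟩ := h.exists_abs_le_div_pow
  have hlim : Tendsto (fun s : ℝ => C / s ^ n * ∫ y, |f y|) atTop (𝓝 0) := by
    simpa using (tendsto_const_nhds.div_atTop (tendsto_pow_atTop hn)).mul_const (∫ y, |f y|)
  refine squeeze_zero_norm' ?_ hlim
  filter_upwards [eventually_gt_atTop 0] with s hs
  rw [← integral_const_mul]
  refine norm_integral_le_of_norm_le (hf.abs.const_mul _) (.of_forall fun y => ?_)
  rw [norm_mul, Real.norm_eq_abs, Real.norm_eq_abs]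
  gcongr
  have hbound := hC ((x, s) - (y, 0)) (by simpa using hs)
  rwa [Prod.snd_sub, sub_zero] at hbound

section Subordination

lemma image_sub_div_Ioi {b : ℝ} (hb : 0 < b) : (fun r : ℝ => r - b / r) '' Ioi 0 = univ := by
  refine eq_univ_of_forall fun u => ⟨(u + √(u ^ 2 + 4 * b)) / 2, ?_, ?_⟩
  all_goals
    have hpos : 0 < u + √(u ^ 2 + 4 * b) := by
      have : |u| < √(u ^ 2 + 4 * b) := Real.lt_sqrt_of_sq_lt (by rw [sq_abs]; linarith)
      linarith [(abs_lt.1 this).1]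
  · exact half_pos hpos
  · have hsq : √(u ^ 2 + 4 * b) ^ 2 = u ^ 2 + 4 * b := Real.sq_sqrt (by positivity)
    field_simp
    linear_combination hsq

lemma injOn_sub_div_Ioi {b : ℝ} (hb : 0 < b) : InjOn (fun r : ℝ => r - b / r) (Ioi 0) := by
  intro r (hr : 0 < r) s (hs : 0 < s) (h : r - b / r = s - b / s)
  have : (r - s) * (1 + b / (r * s)) = 0 := by
    field_simp at h ⊢
    linear_combination h
  exact sub_eq_zero.1 ((mul_eq_zero.1 this).resolve_right (by positivity))

lemma integrableOn_exp_neg_sq_sub_div_sq (b : ℝ) :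
    IntegrableOn (fun r : ℝ => Real.exp (-r ^ 2 - b ^ 2 / r ^ 2)) (Ioi 0) := by
  have hgauss : Integrable fun r : ℝ => Real.exp (-r ^ 2) := by
    simpa using integrable_exp_neg_mul_sq one_pos
  refine hgauss.integrableOn.mono' (Measurable.aestronglyMeasurable (by fun_prop))
    (.of_forall fun r => ?_)
  rw [Real.norm_of_nonneg (Real.exp_pos _).le, Real.exp_le_exp]
  have : 0 ≤ b ^ 2 / r ^ 2 := by positivity
  linarith

lemma setIntegral_Ioi_comp_div {b : ℝ} (hb : 0 < b) {g : ℝ → ℝ} (hg : IntegrableOn g (Ioi 0)) :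
    IntegrableOn (fun r => b / r ^ 2 * g (b / r)) (Ioi 0) ∧
      ∫ r in Ioi (0 : ℝ), b / r ^ 2 * g (b / r) = ∫ r in Ioi (0 : ℝ), g r := by
  have hderiv : ∀ r ∈ Ioi (0 : ℝ),
      HasDerivWithinAt (fun r : ℝ => b / r) (-(b / r ^ 2)) (Ioi 0) r := fun r hr => by
    refine (((hasDerivAt_inv (ne_of_gt hr)).const_mul b).congr_deriv ?_).hasDerivWithinAt
    ring
  have hinj : InjOn (fun r : ℝ => b / r) (Ioi 0) := fun r _ s _ h =>
    inv_injective (mul_left_cancel₀ hb.ne' h)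
  have himage : (fun r : ℝ => b / r) '' Ioi 0 = Ioi 0 := by
    refine Subset.antisymm (by rintro _ ⟨r, hr : 0 < r, rfl⟩; exact div_pos hb hr) fun r hr =>
      ⟨b / r, div_pos hb hr, div_div_cancel₀ hb.ne'⟩
  have habs (r : ℝ) : |-(b / r ^ 2)| • g (b / r) = b / r ^ 2 * g (b / r) := by
    rw [abs_neg, abs_of_nonneg (by positivity), smul_eq_mul]
  have hint := integrableOn_image_iff_integrableOn_abs_deriv_smul measurableSet_Ioi hderiv hinj g
  have hsubst := integral_image_eq_integral_abs_deriv_smul measurableSet_Ioi hderiv hinj g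
  simp only [himage, habs] at hint hsubst
  exact ⟨hint.1 hg, hsubst.symm⟩

-- The Cauchy–Schlömilch substitution `u = r - b / r`, averaged with its image under `r ↦ b / r`.
lemma integral_exp_neg_sq_sub_div_sq {b : ℝ} (hb : 0 ≤ b) :
    ∫ r in Ioi (0 : ℝ), Real.exp (-r ^ 2 - b ^ 2 / r ^ 2) = √Real.pi / 2 * Real.exp (-2 * b) := by
  rcases hb.eq_or_lt with rfl | hb
  · simpa using integral_gaussian_Ioi 1
  have hderiv : ∀ r ∈ Ioi (0 : ℝ),
      HasDerivWithinAt (fun r : ℝ => r - b / r) (1 + b / r ^ 2) (Ioi 0) r := fun r hr => by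
    have := (hasDerivAt_id r).sub ((hasDerivAt_inv (ne_of_gt hr)).const_mul b)
    refine (this.congr_deriv ?_).hasDerivWithinAt
    ring
  have hsubst := integral_image_eq_integral_abs_deriv_smul measurableSet_Ioi hderiv
    (injOn_sub_div_Ioi hb) fun u => Real.exp (-u ^ 2)
  rw [image_sub_div_Ioi hb, setIntegral_univ] at hsubst
  have hgauss : ∫ u : ℝ, Real.exp (-u ^ 2) = √Real.pi := by simpa using integral_gaussian 1
  obtain ⟨hint, hinv⟩ := setIntegral_Ioi_comp_div hb (integrableOn_exp_neg_sq_sub_div_sq b)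
  have hsum : ∀ r ∈ Ioi (0 : ℝ), |1 + b / r ^ 2| • Real.exp (-(r - b / r) ^ 2) =
      Real.exp (2 * b) * (Real.exp (-r ^ 2 - b ^ 2 / r ^ 2) +
        b / r ^ 2 * Real.exp (-(b / r) ^ 2 - b ^ 2 / (b / r) ^ 2)) := fun r (hr : 0 < r) => by
    have hsquare : -(r - b / r) ^ 2 = 2 * b + (-r ^ 2 - b ^ 2 / r ^ 2) := by
      field_simp
      ring
    have hflip : -(b / r) ^ 2 - b ^ 2 / (b / r) ^ 2 = -r ^ 2 - b ^ 2 / r ^ 2 := by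
      field_simp
      ring
    rw [hsquare, hflip, Real.exp_add, abs_of_pos (by positivity), smul_eq_mul]
    ring
  rw [hgauss, setIntegral_congr_fun measurableSet_Ioi hsum, integral_const_mul,
    integral_add (integrableOn_exp_neg_sq_sub_div_sq b) hint, hinv] at hsubst
  rw [hsubst, neg_mul, Real.exp_neg]
  field_simp
  ring

end Subordination

section Kernels

variable {E : Type*} [NormedAddCommGroup E]

/-- The radial kernel `(|x|² + t²)^{-n/2}`. -/
def radialKernel (n : ℕ) (z : E × ℝ) : ℝ :=
  (‖z.1‖ ^ 2 + z.2 ^ 2) ^ (-(n : ℝ) / 2)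

lemma normSq_add_sq_pos {z : E × ℝ} (hz : z ≠ 0) : 0 < ‖z.1‖ ^ 2 + z.2 ^ 2 := by
  contrapose! hz
  have h₁ : ‖z.1‖ ^ 2 = 0 := by nlinarith [sq_nonneg ‖z.1‖, sq_nonneg z.2]
  have h₂ : z.2 ^ 2 = 0 := by nlinarith [sq_nonneg ‖z.1‖, sq_nonneg z.2]
  exact Prod.ext (by simpa using h₁) (by simpa using h₂)

lemma radialKernel_nonneg (n : ℕ) (z : E × ℝ) : 0 ≤ radialKernel n z := by
  unfold radialKernel
  positivity

lemma integral_pow_mul_exp_neg_mul_sq (n : ℕ) {z : E × ℝ} (hz : z ≠ 0) :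
    ∫ r in Ioi (0 : ℝ), r ^ n * Real.exp (-(‖z.1‖ ^ 2 + z.2 ^ 2) * r ^ 2) =
      Real.Gamma ((n + 1) / 2) / 2 * radialKernel (n + 1) z := by
  have hgamma := integral_rpow_mul_exp_neg_mul_rpow (p := 2) (q := n) two_pos
    (neg_one_lt_zero.trans_le n.cast_nonneg) (normSq_add_sq_pos hz)
  simp only [Real.rpow_natCast, Real.rpow_two] at hgamma
  rw [hgamma, radialKernel]
  push_cast
  ring

lemma integrableOn_pow_mul_exp_neg_mul_sq (n : ℕ) {b : ℝ} (hb : 0 < b) :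
    IntegrableOn (fun r : ℝ => r ^ n * Real.exp (-b * r ^ 2)) (Ioi 0) := by
  simpa using integrableOn_rpow_mul_exp_neg_mul_sq hb (neg_one_lt_zero.trans_le n.cast_nonneg)

variable [InnerProductSpace ℝ E]

/-- The Poisson kernel `t (|x|² + t²)^{-(n + 1)/2}` of `E × (0, ∞)`, `n = dim E`, without its
normalising constant. -/
def rawPoissonKernel (z : E × ℝ) : ℝ :=
  z.2 * radialKernel (finrank ℝ E + 1) z

/-- The conjugate Poisson kernel `⟪v, x⟫ (|x|² + t²)^{-(n + 1)/2}` in the direction `v`, without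
its normalising constant: the Poisson extension of the kernel of the Riesz transform along `v`. -/
def rawConjPoissonKernel (v : E) (z : E × ℝ) : ℝ :=
  inner ℝ v z.1 * radialKernel (finrank ℝ E + 1) z

lemma isHomogeneousKernel_radialKernel (n : ℕ) :
    IsHomogeneousKernel n (radialKernel n : E × ℝ → ℝ) where
  contDiffOn := by
    have hsq : ContDiff ℝ ∞ fun z : E × ℝ => ‖z.1‖ ^ 2 + z.2 ^ 2 :=
      (contDiff_fst.norm_sq ℝ).add (contDiff_snd.pow 2)
    exact hsq.contDiffOn.rpow_const_of_ne fun z hz => (normSq_add_sq_pos hz).ne'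
  pow_mul_smul l hl z hz := by
    have hscale : ‖(l • z).1‖ ^ 2 + (l • z).2 ^ 2 = l ^ 2 * (‖z.1‖ ^ 2 + z.2 ^ 2) := by
      rw [Prod.smul_fst, Prod.smul_snd, norm_smul, Real.norm_eq_abs, mul_pow, sq_abs, smul_eq_mul]
      ring
    have hpow : (l ^ 2) ^ (-(n : ℝ) / 2) = (l ^ n)⁻¹ := by
      rw [← Real.rpow_natCast, ← Real.rpow_mul hl.le, ← Real.rpow_natCast, ← Real.rpow_neg hl.le]
      congr 1
      push_cast
      ring
    rw [radialKernel, radialKernel, hscale,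
      Real.mul_rpow (sq_nonneg l) (normSq_add_sq_pos hz).le, hpow,
      mul_inv_cancel_left₀ (by positivity)]

variable (E) in
lemma isHomogeneousKernel_rawPoissonKernel :
    IsHomogeneousKernel (finrank ℝ E) (rawPoissonKernel : E × ℝ → ℝ) :=
  (isHomogeneousKernel_radialKernel _).clm_mul (ContinuousLinearMap.snd ℝ E ℝ)

lemma isHomogeneousKernel_rawConjPoissonKernel (v : E) :
    IsHomogeneousKernel (finrank ℝ E) (rawConjPoissonKernel v) :=
  (isHomogeneousKernel_radialKernel _).clm_mul
    ((innerSL ℝ v).comp (ContinuousLinearMap.fst ℝ E ℝ))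

lemma fderiv_radialKernel (n : ℕ) {z : E × ℝ} (hz : z ≠ 0) (e : E × ℝ) :
    fderiv ℝ (radialKernel n) z e =
      -n * (inner ℝ z.1 e.1 + z.2 * e.2) * radialKernel (n + 2) z := by
  have hsq := (hasFDerivAt_fst (𝕜 := ℝ) (p := z)).norm_sq.add
    ((hasFDerivAt_snd (𝕜 := ℝ) (p := z)).pow 2)
  have hderiv : fderiv ℝ (radialKernel n) z = _ :=
    (hsq.rpow_const (p := -(n : ℝ) / 2) (.inl (normSq_add_sq_pos hz).ne')).fderiv
  have hexponent : -((n + 2 : ℕ) : ℝ) / 2 = -(n : ℝ) / 2 - 1 := by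
    push_cast
    ring
  rw [hderiv, radialKernel, hexponent]
  simp
  ring

lemma fderiv_rawPoissonKernel {z : E × ℝ} (hz : z ≠ 0) (e : E × ℝ) :
    fderiv ℝ rawPoissonKernel z e = e.2 * radialKernel (finrank ℝ E + 1) z -
      (finrank ℝ E + 1) * z.2 * (inner ℝ z.1 e.1 + z.2 * e.2) *
        radialKernel (finrank ℝ E + 3) z := by
  have hderiv : HasFDerivAt rawPoissonKernel _ z := (hasFDerivAt_snd (𝕜 := ℝ) (p := z)).mul
    ((isHomogeneousKernel_radialKernel _).differentiableAt hz).hasFDerivAt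
  rw [hderiv.fderiv]
  simp [fderiv_radialKernel _ hz]
  ring

lemma fderiv_rawConjPoissonKernel (v : E) {z : E × ℝ} (hz : z ≠ 0) (e : E × ℝ) :
    fderiv ℝ (rawConjPoissonKernel v) z e = inner ℝ v e.1 * radialKernel (finrank ℝ E + 1) z -
      (finrank ℝ E + 1) * inner ℝ v z.1 * (inner ℝ z.1 e.1 + z.2 * e.2) *
        radialKernel (finrank ℝ E + 3) z := by
  have hderiv : HasFDerivAt (rawConjPoissonKernel v) _ z :=
    ((innerSL ℝ v).comp (ContinuousLinearMap.fst ℝ E ℝ)).hasFDerivAt.mul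
      ((isHomogeneousKernel_radialKernel _).differentiableAt hz).hasFDerivAt
  rw [hderiv.fderiv]
  simp [fderiv_radialKernel _ hz]
  ring

/-- One of the Cauchy–Riemann equations for the conjugate system. -/
lemma fderiv_rawConjPoissonKernel_vertical (v : E) {z : E × ℝ} (hz : z ≠ 0) :
    fderiv ℝ (rawConjPoissonKernel v) z (0, 1) = fderiv ℝ rawPoissonKernel z (v, 0) := by
  rw [fderiv_rawConjPoissonKernel v hz, fderiv_rawPoissonKernel hz]
  simp only [inner_zero_right, mul_zero, mul_one, zero_mul, add_zero, zero_add, zero_sub,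
    real_inner_comm v]
  ring

end Kernels

section Fourier

open FourierTransform Real

variable {E : Type*} [NormedAddCommGroup E] [InnerProductSpace ℝ E] [FiniteDimensional ℝ E]
  [MeasurableSpace E] [BorelSpace E]

lemma eq_of_fourier_eq {f g : E → ℂ} (hf : Integrable f) (hg : Integrable g) (hfc : Continuous f)
    (hgc : Continuous g) (h : 𝓕 f = 𝓕 g) : f = g := by
  have hzero : 𝓕 (f - g) = 0 := by
    ext ξ
    have hfξ := (fourierIntegral_convergent_iff ξ).2 hf
    have hgξ := (fourierIntegral_convergent_iff ξ).2 hg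
    simp only [fourier_eq, Pi.sub_apply, smul_sub]
    rw [integral_sub hfξ hgξ, ← fourier_eq, ← fourier_eq, h, sub_self, Pi.zero_apply]
  have hinv := (hfc.sub hgc).fourierInv_fourier_eq (hf.sub hg)
    (by rw [hzero]; exact integrable_zero _ _ _)
  rw [hzero] at hinv
  rw [← sub_eq_zero, ← hinv]
  ext ξ
  simp [fourierInv_eq]

lemma fourier_const_mul (c : ℂ) (f : E → ℂ) (ξ : E) :
    𝓕 (fun y => c * f y) ξ = c * 𝓕 f ξ :=
  congrFun (VectorFourier.fourierIntegral_const_smul fourierChar volume (innerₗ E) f c) ξ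

lemma fourier_integral_comm {α : Type*} [MeasurableSpace α] {μ : Measure α} [SFinite μ]
    {G : E → α → ℂ} (hG : Integrable (Function.uncurry G) (volume.prod μ)) (ξ : E) :
    𝓕 (fun y => ∫ r, G y r ∂μ) ξ = ∫ r, 𝓕 (fun y => G y r) ξ ∂μ := by
  simp only [fourier_eq, Circle.smul_def, ← integral_smul]
  refine integral_integral_swap
    (f := fun v r => (fourierChar (-inner ℝ v ξ) : ℂ) • G v r) (μ := volume) (ν := μ) ?_
  have hphase : Continuous fun z : E => (fourierChar (-inner ℝ z ξ) : ℂ) := by fun_prop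
  refine hG.norm.mono' ?_ (.of_forall fun w => ?_)
  · exact hphase.aestronglyMeasurable.comp_fst.smul hG.1
  · simp [Function.uncurry_def, Circle.norm_coe]

lemma fourier_pow_mul_exp_neg_mul_sq {t r : ℝ} (ht : 0 < t) (hr : 0 < r) (ξ : E) :
    𝓕 (fun y : E => ((r ^ finrank ℝ E * exp (-(‖y‖ ^ 2 + t ^ 2) * r ^ 2) : ℝ) : ℂ)) ξ =
      (π ^ ((finrank ℝ E : ℝ) / 2) * exp (-(t * r) ^ 2 - (π * t * ‖ξ‖) ^ 2 / (t * r) ^ 2) : ℝ) := by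
  have hr2 : ((r ^ 2 : ℝ) : ℂ).re = r ^ 2 := Complex.ofReal_re _
  have hgauss := fourier_gaussian_innerProductSpace (V := E) (by rw [hr2]; positivity) ξ
  have hfactor : (fun y : E => ((r ^ finrank ℝ E * exp (-(‖y‖ ^ 2 + t ^ 2) * r ^ 2) : ℝ) : ℂ)) =
      fun y => ((r ^ finrank ℝ E * exp (-(t * r) ^ 2) : ℝ) : ℂ) *
        Complex.exp (-((r ^ 2 : ℝ) : ℂ) * ‖y‖ ^ 2) := by
    ext y
    rw [show -(‖y‖ ^ 2 + t ^ 2) * r ^ 2 = -(t * r) ^ 2 + -r ^ 2 * ‖y‖ ^ 2 by ring, exp_add]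
    push_cast
    ring
  have hpow : ((π : ℂ) / ((r ^ 2 : ℝ) : ℂ)) ^ ((finrank ℝ E : ℂ) / 2) =
      ((π ^ ((finrank ℝ E : ℝ) / 2) / r ^ finrank ℝ E : ℝ) : ℂ) := by
    have hroot : (r ^ 2) ^ ((finrank ℝ E : ℝ) / 2) = r ^ finrank ℝ E := by
      rw [← rpow_natCast r 2, ← rpow_mul hr.le, ← rpow_natCast]
      congr 1
      push_cast
      ring
    rw [← hroot, ← div_rpow pi_pos.le (by positivity), Complex.ofReal_cpow (by positivity)]
    push_cast
    rfl
  have hexp : Complex.exp (-(π : ℂ) ^ 2 * (‖ξ‖ : ℂ) ^ 2 / ((r ^ 2 : ℝ) : ℂ)) =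
      (exp (-((π * t * ‖ξ‖) ^ 2 / (t * r) ^ 2)) : ℝ) := by
    rw [show (π * t * ‖ξ‖) ^ 2 / (t * r) ^ 2 = π ^ 2 * ‖ξ‖ ^ 2 / r ^ 2 by field_simp]
    push_cast
    ring_nf
  rw [hfactor, fourier_const_mul, hgauss, hpow, hexp, sub_eq_add_neg, exp_add]
  norm_cast
  field_simp

/-- The total mass of `rawPoissonKernel (·, t)` in dimension `n`. -/
def poissonMass (n : ℕ) : ℝ :=
  π ^ (((n : ℝ) + 1) / 2) / Gamma ((n + 1) / 2)

lemma poissonMass_pos (n : ℕ) : 0 < poissonMass n :=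
  div_pos (by positivity) (Gamma_pos_of_pos (by positivity))

lemma integrable_pow_mul_exp_neg_mul_sq {t : ℝ} (ht : 0 < t) :
    Integrable (Function.uncurry fun (y : E) (r : ℝ) =>
      ((r ^ finrank ℝ E * exp (-(‖y‖ ^ 2 + t ^ 2) * r ^ 2) : ℝ) : ℂ))
      (volume.prod (volume.restrict (Ioi 0))) := by
  have hcont : Continuous (Function.uncurry fun (y : E) (r : ℝ) =>
      ((r ^ finrank ℝ E * exp (-(‖y‖ ^ 2 + t ^ 2) * r ^ 2) : ℝ) : ℂ)) := by
    unfold Function.uncurry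
    fun_prop
  have hnorm (y : E) : ∫ r in Ioi (0 : ℝ),
      ‖((r ^ finrank ℝ E * exp (-(‖y‖ ^ 2 + t ^ 2) * r ^ 2) : ℝ) : ℂ)‖ =
        Gamma ((finrank ℝ E + 1) / 2) / 2 * radialKernel (finrank ℝ E + 1) (y, t) := by
    rw [← integral_pow_mul_exp_neg_mul_sq _ (z := (y, t)) (ne_zero_of_snd_pos ht)]
    refine setIntegral_congr_fun measurableSet_Ioi fun r (hr : 0 < r) => ?_
    rw [Complex.norm_real, norm_of_nonneg (by positivity)]
  rw [integrable_prod_iff hcont.aestronglyMeasurable]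
  refine ⟨.of_forall fun y =>
    (integrableOn_pow_mul_exp_neg_mul_sq _ (b := ‖y‖ ^ 2 + t ^ 2) (by positivity)).ofReal, ?_⟩
  simp only [Function.uncurry_apply_pair, hnorm]
  exact ((isHomogeneousKernel_radialKernel _).integrable_slice ht (Nat.lt_succ_self _)).const_mul _

lemma fourier_rawPoissonKernel {t : ℝ} (ht : 0 < t) (ξ : E) :
    𝓕 (fun y : E => (rawPoissonKernel (y, t) : ℂ)) ξ =
      (poissonMass (finrank ℝ E) * exp (-2 * (π * t * ‖ξ‖)) : ℝ) := by
  have : 0 < Gamma (((finrank ℝ E : ℝ) + 1) / 2) := Gamma_pos_of_pos (by positivity)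
  have hsubord : (fun y : E => (rawPoissonKernel (y, t) : ℂ)) = fun y : E =>
      ((2 * t / Gamma ((finrank ℝ E + 1) / 2) : ℝ) : ℂ) * ∫ r in Ioi (0 : ℝ),
        ((r ^ finrank ℝ E * exp (-(‖y‖ ^ 2 + t ^ 2) * r ^ 2) : ℝ) : ℂ) := by
    ext y
    rw [integral_complex_ofReal,
      integral_pow_mul_exp_neg_mul_sq _ (z := (y, t)) (ne_zero_of_snd_pos ht), rawPoissonKernel]
    norm_cast
    field_simp
  have hgauss : ∫ r in Ioi (0 : ℝ), exp (-(t * r) ^ 2 - (π * t * ‖ξ‖) ^ 2 / (t * r) ^ 2) =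
      t⁻¹ * (√π / 2 * exp (-2 * (π * t * ‖ξ‖))) := by
    rw [integral_comp_mul_left_Ioi (fun r => exp (-r ^ 2 - (π * t * ‖ξ‖) ^ 2 / r ^ 2)) 0 ht,
      mul_zero, integral_exp_neg_sq_sub_div_sq (by positivity), smul_eq_mul]
  rw [hsubord, fourier_const_mul, fourier_integral_comm (integrable_pow_mul_exp_neg_mul_sq ht),
    setIntegral_congr_fun measurableSet_Ioi fun r hr => fourier_pow_mul_exp_neg_mul_sq ht hr ξ,
    integral_complex_ofReal, integral_const_mul, hgauss, poissonMass, add_div,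
    rpow_add pi_pos, ← sqrt_eq_rpow]
  norm_cast
  field_simp

end Fourier

section Young

lemma rpow_lintegral_mul_le {α : Type*} [MeasurableSpace α] {μ : Measure α} {r : ℝ} (hr : 1 ≤ r)
    {a h : α → ℝ≥0∞} (ha : AEMeasurable a μ) (hh : AEMeasurable h μ) :
    (∫⁻ y, a y * h y ∂μ) ^ r ≤ (∫⁻ y, a y ∂μ) ^ (r - 1) * ∫⁻ y, a y * h y ^ r ∂μ := by
  have hr0 : 0 < r := one_pos.trans_le hr
  have hexp : 0 ≤ 1 - r⁻¹ := sub_nonneg.2 (inv_le_one_of_one_le₀ hr)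
  have hsplit (y : α) : a y ^ (1 - r⁻¹) * (a y * h y ^ r) ^ r⁻¹ = a y * h y := by
    rw [ENNReal.mul_rpow_of_nonneg _ _ (by positivity), ← mul_assoc,
      ← ENNReal.rpow_add_of_nonneg _ _ hexp (by positivity), sub_add_cancel, ENNReal.rpow_one,
      ENNReal.rpow_rpow_inv hr0.ne']
  have holder := ENNReal.lintegral_mul_norm_pow_le ha (ha.mul (hh.pow_const r)) hexp
    (inv_nonneg.2 hr0.le) (sub_add_cancel 1 r⁻¹)
  simp only [Pi.mul_apply, hsplit] at holder
  refine (ENNReal.rpow_le_rpow holder hr0.le).trans_eq ?_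
  rw [ENNReal.mul_rpow_of_nonneg _ _ hr0.le, ← ENNReal.rpow_mul, ENNReal.rpow_inv_rpow hr0.ne',
    sub_mul, one_mul, inv_mul_cancel₀ hr0.ne']

lemma eLpNorm_integral_smul_le {α β F : Type*} [MeasurableSpace α] [MeasurableSpace β]
    [NormedAddCommGroup F] [NormedSpace ℝ F] {μ : Measure α} {ν : Measure β} [SFinite μ]
    [SFinite ν] {p : ℝ≥0∞} (hp : 1 ≤ p) (hp_top : p ≠ ⊤) {a : β → ℝ} {h : α → β → F}
    (ha : AEMeasurable a ν) (hh : AEStronglyMeasurable (Function.uncurry h) (μ.prod ν))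
    {B : ℝ≥0∞} (hB : ∀ᵐ y ∂ν, eLpNorm (fun x => h x y) p μ ≤ B) :
    eLpNorm (fun x => ∫ y, a y • h x y ∂ν) p μ ≤ (∫⁻ y, ‖a y‖ₑ ∂ν) * B := by
  have hp0 : p ≠ 0 := (one_pos.trans_le hp).ne'
  have hr : 1 ≤ p.toReal := by simpa using ENNReal.toReal_mono hp_top hp
  have hr0 : 0 < p.toReal := one_pos.trans_le hr
  have hslice : ∀ᵐ y ∂ν, ∫⁻ x, ‖h x y‖ₑ ^ p.toReal ∂μ ≤ B ^ p.toReal := by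
    filter_upwards [hB] with y hy
    rwa [eLpNorm_eq_lintegral_rpow_enorm_toReal hp0 hp_top, one_div,
      ENNReal.rpow_inv_le_iff hr0] at hy
  rw [eLpNorm_eq_lintegral_rpow_enorm_toReal hp0 hp_top, one_div, ENNReal.rpow_inv_le_iff hr0]
  set A := ∫⁻ y, ‖a y‖ₑ ∂ν with hA
  have hmeas : AEMeasurable (fun z : α × β => ‖a z.2‖ₑ * ‖h z.1 z.2‖ₑ ^ p.toReal) (μ.prod ν) :=
    ha.comp_snd.enorm.mul (hh.enorm.pow_const _)
  calc ∫⁻ x, ‖∫ y, a y • h x y ∂ν‖ₑ ^ p.toReal ∂μ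
      ≤ ∫⁻ x, (∫⁻ y, ‖a y‖ₑ * ‖h x y‖ₑ ∂ν) ^ p.toReal ∂μ := by
        simp only [← enorm_smul]
        gcongr
        exact enorm_integral_le_lintegral_enorm _
    _ ≤ ∫⁻ x, A ^ (p.toReal - 1) * ∫⁻ y, ‖a y‖ₑ * ‖h x y‖ₑ ^ p.toReal ∂ν ∂μ := by
        refine lintegral_mono_ae ?_
        filter_upwards [hh.prodMk_left] with x hx
        exact rpow_lintegral_mul_le hr ha.enorm hx.enorm
    _ = A ^ (p.toReal - 1) * ∫⁻ y, ‖a y‖ₑ * ∫⁻ x, ‖h x y‖ₑ ^ p.toReal ∂μ ∂ν := by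
        rw [lintegral_const_mul'' _ hmeas.lintegral_prod_right', lintegral_lintegral_swap hmeas]
        congr 1
        refine lintegral_congr_ae ?_
        filter_upwards [hh.prod_swap.prodMk_left] with y hy
        exact lintegral_const_mul'' _ (hy.enorm.pow_const _)
    _ ≤ A ^ (p.toReal - 1) * ∫⁻ y, ‖a y‖ₑ * B ^ p.toReal ∂ν := by
        gcongr A ^ (p.toReal - 1) * ?_
        exact lintegral_mono_ae (hslice.mono fun y hy => by gcongr)
    _ = (A * B) ^ p.toReal := by
        rw [lintegral_mul_const'' _ ha.enorm, ← hA, ENNReal.mul_rpow_of_nonneg _ _ hr0.le,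
          ← mul_assoc]
        nth_rewrite 2 [← ENNReal.rpow_one A]
        rw [← ENNReal.rpow_add_of_nonneg _ _ (sub_nonneg.2 hr) zero_le_one, sub_add_cancel]

variable {G : Type*} [MeasurableSpace G] [AddCommGroup G] [MeasurableAdd₂ G] [MeasurableNeg G]
  {μ : Measure G} [SFinite μ] [μ.IsAddLeftInvariant] {p : ℝ≥0∞} {a g : G → ℝ}

lemma eLpNorm_convolution_le (hp : 1 ≤ p) (hp_top : p ≠ ⊤) (ha : AEStronglyMeasurable a μ)
    (hg : AEStronglyMeasurable g μ) :
    eLpNorm (convolution a g (ContinuousLinearMap.mul ℝ ℝ) μ) p μ ≤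
      (∫⁻ y, ‖a y‖ₑ ∂μ) * eLpNorm g p μ := by
  refine eLpNorm_integral_smul_le (h := fun x y => g (x - y)) hp hp_top ha.aemeasurable
    (hg.comp_quasiMeasurePreserving (quasiMeasurePreserving_sub μ μ)) (.of_forall fun y => ?_)
  exact (eLpNorm_comp_measurePreserving hg (measurePreserving_sub_right μ y)).le

lemma memLp_convolution (hp : 1 ≤ p) (hp_top : p ≠ ⊤) (ha : Integrable a μ) (hg : MemLp g p μ) :
    MemLp (convolution a g (ContinuousLinearMap.mul ℝ ℝ) μ) p μ :=
  ⟨(ha.1.convolution_integrand (ContinuousLinearMap.mul ℝ ℝ) hg.1).integral_prod_right',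
    (eLpNorm_convolution_le hp hp_top ha.1 hg.1).trans_lt (ENNReal.mul_lt_top ha.2 hg.2)⟩

end Young

section Semigroup

lemma finrank_lt_mul {E : Type*} [NormedAddCommGroup E] [NormedSpace ℝ E]
    [FiniteDimensional ℝ E] [Nontrivial E] {n : ℕ} {q : ℝ} (hn : finrank ℝ E ≤ n) (hq : 1 < q) :
    (finrank ℝ E : ℝ) < n * q := by
  have hd : (0 : ℝ) < finrank ℝ E := by exact_mod_cast Module.finrank_pos
  have hdn : (finrank ℝ E : ℝ) ≤ n := by exact_mod_cast hn
  nlinarith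

variable {E : Type*} [NormedAddCommGroup E] [InnerProductSpace ℝ E] [FiniteDimensional ℝ E]
  [MeasurableSpace E] [BorelSpace E] {n : ℕ} {p q : ℝ}

lemma kernelConv_eq_convolution (Ψ : E × ℝ → ℝ) (f : E → ℝ) (z : E × ℝ) :
    kernelConv Ψ f z =
      convolution (fun y => Ψ (y, z.2)) f (ContinuousLinearMap.mul ℝ ℝ) volume z.1 :=
  kernelConv_eq_integral_slice Ψ f z

lemma kernelConv_congr {Φ Ψ : E × ℝ → ℝ} (h : ∀ w : E × ℝ, 0 < w.2 → Φ w = Ψ w) (f : E → ℝ)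
    {z : E × ℝ} (hz : 0 < z.2) : kernelConv Φ f z = kernelConv Ψ f z := by
  simp only [kernelConv]
  congr! 2 with y
  rw [h (z - (y, 0)) (by simpa using hz)]

lemma kernelConv_slice_comm (Φ Ψ : E × ℝ → ℝ) (x : E) (s t : ℝ) :
    kernelConv Φ (fun y => Ψ (y, s)) (x, t) = kernelConv Ψ (fun y => Φ (y, t)) (x, s) := by
  rw [kernelConv_eq_integral_slice, kernelConv]
  simp [mul_comm]

lemma integrable_rawPoissonKernel {t : ℝ} (ht : 0 < t) :
    Integrable fun y : E => rawPoissonKernel (y, t) :=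
  ((isHomogeneousKernel_radialKernel _).integrable_slice ht (Nat.lt_succ_self _)).const_mul t

lemma memLp_rawPoissonKernel [Nontrivial E] {t : ℝ} (ht : 0 < t) (hq : 1 < q) :
    MemLp (fun y : E => rawPoissonKernel (y, t)) (ENNReal.ofReal q) :=
  (isHomogeneousKernel_rawPoissonKernel E).memLp_slice ht hq.le (finrank_lt_mul le_rfl hq)

open FourierTransform in
lemma kernelConv_rawPoissonKernel [Nontrivial E] {s : ℝ} (hs : 0 < s) {z : E × ℝ} (hz : 0 < z.2) :
    kernelConv rawPoissonKernel (fun y => rawPoissonKernel (y, s)) z =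
      poissonMass (finrank ℝ E) * rawPoissonKernel (z + (0, s)) := by
  obtain ⟨x, t⟩ := z
  have ht : 0 < t := hz
  have hint {r : ℝ} (hr : 0 < r) : Integrable fun y : E => (rawPoissonKernel (y, r) : ℂ) :=
    (integrable_rawPoissonKernel hr).ofReal
  have hconv : (fun x : E => ((kernelConv rawPoissonKernel (fun y => rawPoissonKernel (y, s))
      (x, t) : ℝ) : ℂ)) = convolution (fun y : E => (rawPoissonKernel (y, t) : ℂ))
        (fun y => (rawPoissonKernel (y, s) : ℂ)) (ContinuousLinearMap.mul ℂ ℂ) volume := by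
    ext x
    rw [kernelConv_eq_integral_slice, ← integral_complex_ofReal]
    simp [convolution]
  have hcont : Continuous fun x : E => ((kernelConv rawPoissonKernel
      (fun y => rawPoissonKernel (y, s)) (x, t) : ℝ) : ℂ) :=
    Complex.continuous_ofReal.comp
      ((isHomogeneousKernel_rawPoissonKernel E).continuous_kernelConv_slice .two_two
        (finrank_lt_mul le_rfl one_lt_two) (memLp_rawPoissonKernel hs one_lt_two) ht)
  have hcont' : Continuous fun x : E => (rawPoissonKernel (x, t + s) : ℂ) :=
    Complex.continuous_ofReal.comp
      ((isHomogeneousKernel_rawPoissonKernel E).continuous_slice (add_pos ht hs))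
  have hfourier : 𝓕 (fun x : E => ((kernelConv rawPoissonKernel
      (fun y => rawPoissonKernel (y, s)) (x, t) : ℝ) : ℂ)) =
      𝓕 fun x : E => (poissonMass (finrank ℝ E) : ℂ) * (rawPoissonKernel (x, t + s) : ℂ) := by
    ext ξ
    rw [hconv, Real.fourier_mul_convolution_eq (hint ht) (hint hs), fourier_rawPoissonKernel ht,
      fourier_rawPoissonKernel hs, fourier_const_mul, fourier_rawPoissonKernel (add_pos ht hs),
      mul_add, add_mul, mul_add, Real.exp_add]
    push_cast
    ring
  have heq := eq_of_fourier_eq (hconv ▸ (hint ht).integrable_convolution _ (hint hs))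
    ((hint (add_pos ht hs)).const_mul _) hcont (continuous_const.mul hcont') hfourier
  have := congrFun heq x
  norm_cast at this
  simpa using this

lemma kernelConv_fderiv_eq {Ψ Φ : E × ℝ → ℝ} {f : E → ℝ} {c : ℝ} {w : E × ℝ}
    (hΨ : IsHomogeneousKernel n Ψ) (hpq : p.HolderConjugate q)
    (hn : (finrank ℝ E : ℝ) < n * q) (hf : MemLp f (ENNReal.ofReal p))
    (h : ∀ z : E × ℝ, 0 < z.2 → kernelConv Ψ f z = c * Φ (z + w)) {z : E × ℝ} (hz : 0 < z.2)
    (e : E × ℝ) :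
    kernelConv (fun z => fderiv ℝ Ψ z e) f z = c * fderiv ℝ Φ (z + w) e := by
  have heq : kernelConv Ψ f =ᶠ[𝓝 z] c • fun z => Φ (z + w) := (eventually_snd_pos hz).mono h
  rw [← hΨ.fderiv_kernelConv hpq hn hf hz, heq.fderiv_eq, fderiv_const_smul_field, Pi.smul_apply,
    fderiv_comp_add_right]
  rfl

lemma hasDerivAt_vertical {E G : Type*} [NormedAddCommGroup E] [NormedSpace ℝ E]
    [NormedAddCommGroup G] [NormedSpace ℝ G] {F : E × ℝ → G} {x : E} {t : ℝ}
    (hF : DifferentiableAt ℝ F (x, t)) :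
    HasDerivAt (fun τ => F (x, τ)) (fderiv ℝ F (x, t) (0, 1)) t :=
  hF.hasFDerivAt.comp_hasDerivAt t ((hasDerivAt_const t x).prodMk (hasDerivAt_id t))

lemma fderiv_horizontal {E G : Type*} [NormedAddCommGroup E] [NormedSpace ℝ E]
    [NormedAddCommGroup G] [NormedSpace ℝ G] {F : E × ℝ → G} {x : E} {t : ℝ}
    (hF : DifferentiableAt ℝ F (x, t)) (e : E) :
    fderiv ℝ (fun y => F (y, t)) x e = fderiv ℝ F (x, t) (e, 0) := by
  have h := hF.hasFDerivAt.comp (f := fun y => (y, t)) x (hasFDerivAt_prodMk_left x t)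
  exact DFunLike.congr_fun h.fderiv e

lemma eq_of_fderiv_vertical_eq {E : Type*} [NormedAddCommGroup E] [NormedSpace ℝ E]
    {F G : E × ℝ → ℝ} (hF : ∀ z : E × ℝ, 0 < z.2 → DifferentiableAt ℝ F z)
    (hG : ∀ z : E × ℝ, 0 < z.2 → DifferentiableAt ℝ G z)
    (hderiv : ∀ z : E × ℝ, 0 < z.2 → fderiv ℝ F z (0, 1) = fderiv ℝ G z (0, 1)) {x : E}
    (hF_lim : Tendsto (fun t => F (x, t)) atTop (𝓝 0))
    (hG_lim : Tendsto (fun t => G (x, t)) atTop (𝓝 0)) {t : ℝ} (ht : 0 < t) :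
    F (x, t) = G (x, t) := by
  have hdiff (τ : ℝ) (hτ : 0 < τ) : HasDerivAt (fun τ => F (x, τ) - G (x, τ)) 0 τ := by
    simpa [hderiv (x, τ) hτ] using
      (hasDerivAt_vertical (hF (x, τ) hτ)).fun_sub (hasDerivAt_vertical (hG (x, τ) hτ))
  obtain ⟨a, ha⟩ := isOpen_Ioi.exists_is_const_of_deriv_eq_zero isPreconnected_Ioi
    (fun τ hτ => (hdiff τ hτ).differentiableAt.differentiableWithinAt)
    fun τ hτ => (hdiff τ hτ).deriv
  have hlim : Tendsto (fun τ => F (x, τ) - G (x, τ)) atTop (𝓝 a) :=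
    tendsto_const_nhds.congr' ((eventually_gt_atTop 0).mono fun τ hτ => (ha τ hτ).symm)
  have ha0 : a = 0 - 0 := tendsto_nhds_unique hlim (hF_lim.sub hG_lim)
  linarith [ha t ht]

lemma kernelConv_rawConjPoissonKernel [Nontrivial E] (v : E) {s : ℝ} (hs : 0 < s) {z : E × ℝ}
    (hz : 0 < z.2) :
    kernelConv (rawConjPoissonKernel v) (fun y => rawPoissonKernel (y, s)) z =
      poissonMass (finrank ℝ E) * rawConjPoissonKernel v (z + (0, s)) := by
  have hP := isHomogeneousKernel_rawPoissonKernel E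
  have hQ := isHomogeneousKernel_rawConjPoissonKernel v
  have hL2 := memLp_rawPoissonKernel (E := E) hs one_lt_two
  have hn := finrank_lt_mul (E := E) le_rfl one_lt_two
  have hshift {z : E × ℝ} (hz : 0 < z.2) : z + (0, s) ≠ 0 :=
    ne_zero_of_snd_pos (add_pos hz hs)
  have hQ_diff (z : E × ℝ) (hz : 0 < z.2) :
      DifferentiableAt ℝ (fun z => rawConjPoissonKernel v (z + (0, s))) z :=
    (differentiableAt_comp_add_right _).2 (hQ.differentiableAt (hshift hz))
  refine eq_of_fderiv_vertical_eq (x := z.1) (t := z.2)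
    (fun w hw => hQ.differentiableAt_kernelConv .two_two hn hL2 hw)
    (fun w hw => (hQ_diff w hw).const_mul _) (fun w hw => ?_)
    (hQ.tendsto_kernelConv_atTop Module.finrank_pos.ne' (integrable_rawPoissonKernel hs) _) ?_ hz
  · rw [hQ.fderiv_kernelConv .two_two hn hL2 hw, fderiv_const_mul (hQ_diff w hw),
      fderiv_comp_add_right, smul_apply, smul_eq_mul,
      fderiv_rawConjPoissonKernel_vertical v (hshift hw),
      ← kernelConv_fderiv_eq hP .two_two hn hL2 (fun z hz => kernelConv_rawPoissonKernel hs hz) hw]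
    exact kernelConv_congr (fun u hu =>
      fderiv_rawConjPoissonKernel_vertical v (ne_zero_of_snd_pos hu)) _ hw
  · simpa using ((hQ.tendsto_atTop Module.finrank_pos.ne' z.1).comp
      (tendsto_atTop_add_const_right atTop s tendsto_id)).const_mul (poissonMass (finrank ℝ E))

lemma IsHomogeneousKernel.memLp_kernelConv {Ψ : E × ℝ → ℝ} (h : IsHomogeneousKernel n Ψ)
    (hn : finrank ℝ E < n) {r : ℝ≥0∞} (hr : 1 ≤ r) (hr_top : r ≠ ⊤) {f : E → ℝ} (hf : MemLp f r)
    {t : ℝ} (ht : 0 < t) : MemLp (fun x => kernelConv Ψ f (x, t)) r := by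
  simpa only [kernelConv_eq_convolution] using
    memLp_convolution hr hr_top (h.integrable_slice ht hn) hf

/-- `B` is, up to the factor `poissonMass`, the Riesz transform of `A` along `v`, in the regularised
form in which the Riesz transform is replaced by convolution with
`rawConjPoissonKernel v (·, s)` and `B` is raised by `s`. -/
structure IsRieszPair (v : E) (n : ℕ) (A B : E × ℝ → ℝ) : Prop where
  left : IsHomogeneousKernel n A
  right : IsHomogeneousKernel n B
  kernelConv_left : ∀ s : ℝ, 0 < s → ∀ z : E × ℝ, 0 < z.2 →
    kernelConv A (fun y => rawConjPoissonKernel v (y, s)) z =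
      poissonMass (finrank ℝ E) * B (z + (0, s))

lemma isRieszPair_raw [Nontrivial E] (v : E) :
    IsRieszPair v (finrank ℝ E) rawPoissonKernel (rawConjPoissonKernel v) where
  left := isHomogeneousKernel_rawPoissonKernel E
  right := isHomogeneousKernel_rawConjPoissonKernel v
  kernelConv_left s hs z hz := by
    rw [kernelConv_slice_comm, kernelConv_rawConjPoissonKernel v hz hs]
    simp [Prod.add_def, add_comm]

namespace IsRieszPair

variable {v : E} {A B : E × ℝ → ℝ} {f : E → ℝ}

lemma fderiv_apply [Nontrivial E] (h : IsRieszPair v n A B) (hn : finrank ℝ E ≤ n) (e : E × ℝ) :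
    IsRieszPair v (n + 1) (fun z => fderiv ℝ A z e) (fun z => fderiv ℝ B z e) where
  left := h.left.fderiv_apply e
  right := h.right.fderiv_apply e
  kernelConv_left s hs _ hz :=
    kernelConv_fderiv_eq h.left .two_two (finrank_lt_mul hn one_lt_two)
      ((isHomogeneousKernel_rawConjPoissonKernel v).memLp_slice hs one_le_two
        (finrank_lt_mul le_rfl one_lt_two)) (h.kernelConv_left s hs) hz e

lemma kernelConv_kernelConv [Nontrivial E] (h : IsRieszPair v n A B) (hn : finrank ℝ E < n)
    (hpq : p.HolderConjugate q) (hf : MemLp f (ENNReal.ofReal p)) {s t : ℝ} (hs : 0 < s)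
    (ht : 0 < t) (x : E) :
    kernelConv (rawConjPoissonKernel v) (fun y => kernelConv A f (y, t)) (x, s) =
      poissonMass (finrank ℝ E) * kernelConv B f (x, t + s) := by
  have hQ := isHomogeneousKernel_rawConjPoissonKernel v
  have hp : 1 ≤ ENNReal.ofReal p := by simpa using hpq.lt.le
  have hdq := finrank_lt_mul (E := E) le_rfl hpq.symm.lt
  have hslice : convolution (fun y => rawConjPoissonKernel v (y, s)) (fun y => A (y, t))
      (ContinuousLinearMap.mul ℝ ℝ) volume =
      fun y => poissonMass (finrank ℝ E) * B (y, t + s) := by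
    ext y
    rw [← kernelConv_eq_convolution _ _ (y, s), kernelConv_slice_comm,
      h.kernelConv_left s hs (y, t) ht]
    simp
  simp only [kernelConv_eq_convolution]
  rw [← convolution_assoc (ContinuousLinearMap.mul ℝ ℝ) (ContinuousLinearMap.mul ℝ ℝ)
    (ContinuousLinearMap.mul ℝ ℝ) (ContinuousLinearMap.mul ℝ ℝ) (fun a b c => mul_assoc a b c)
    (hQ.continuous_slice hs).aestronglyMeasurable (h.left.continuous_slice ht).aestronglyMeasurable
    hf.1 ?_ ?_ ?_, hslice]
  · simp [convolution, mul_assoc, integral_const_mul]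
  · exact .of_forall fun y => hQ.integrable_slice_mul .two_two (finrank_lt_mul le_rfl one_lt_two)
      (h.left.memLp_slice ht one_le_two (finrank_lt_mul hn.le one_lt_two)) hs y
  · refine .of_forall fun y => ?_
    simpa [ConvolutionExistsAt] using
      (h.left.integrable_slice_mul hpq (finrank_lt_mul hn.le hpq.symm.lt) hf ht y).norm
  · have habs := memLp_convolution hp ENNReal.ofReal_ne_top
      (h.left.integrable_slice ht hn).norm hf.norm
    have hnonneg (y : E) : 0 ≤ convolution (fun y => ‖A (y, t)‖) (fun y => ‖f y‖)
        (ContinuousLinearMap.mul ℝ ℝ) volume y :=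
      integral_nonneg fun _ => mul_nonneg (norm_nonneg _) (norm_nonneg _)
    have hint := (hQ.integrable_slice_mul hpq hdq habs hs x).norm
    simp only [norm_mul, Real.norm_of_nonneg (hnonneg _)] at hint
    simpa [ConvolutionExistsAt] using hint

lemma tendsto_kernelConv_kernelConv [Nontrivial E] (h : IsRieszPair v n A B) (hn : finrank ℝ E < n)
    (hpq : p.HolderConjugate q) (hf : MemLp f (ENNReal.ofReal p)) {t : ℝ} (ht : 0 < t) (x : E) :
    Tendsto (fun s => kernelConv (rawConjPoissonKernel v) (fun y => kernelConv A f (y, t)) (x, s))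
      (𝓝[>] 0) (𝓝 (poissonMass (finrank ℝ E) * kernelConv B f (x, t))) := by
  refine ((h.right.tendsto_kernelConv_vertical hpq (finrank_lt_mul hn.le hpq.symm.lt)
    hf x ht).const_mul _).congr' ?_
  filter_upwards [self_mem_nhdsWithin] with s hs
  exact (h.kernelConv_kernelConv hn hpq hf hs ht x).symm

end IsRieszPair

end Semigroup

section RieszInequality

lemma cos_mul_le_cos_mul_pi_div_two_add {p θ : ℝ} (hp : 0 ≤ p) (hθ : |θ| ≤ Real.pi / 2) :
    Real.cos (p * θ) ≤ Real.cos (p * (Real.pi / 2)) + p * (Real.pi / 2) * Real.cos θ := by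
  have hpi := Real.pi_pos
  have hjordan : Real.pi / 2 - |θ| ≤ Real.pi / 2 * Real.cos θ := by
    have h := Real.mul_le_sin (x := Real.pi / 2 - |θ|) (by linarith) (by linarith [abs_nonneg θ])
    rw [Real.sin_pi_div_two_sub, Real.cos_abs, div_mul_eq_mul_div, div_le_iff₀ hpi] at h
    linarith
  have hlip := le_of_abs_le (Real.abs_cos_sub_cos_le (p * |θ|) (p * (Real.pi / 2)))
  rw [← mul_sub, abs_mul, abs_of_nonneg hp, abs_of_nonpos (sub_nonpos.2 hθ)] at hlip
  rw [← Real.cos_abs (p * θ), abs_mul, abs_of_nonneg hp]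
  nlinarith [mul_le_mul_of_nonneg_left hjordan hp]

lemma exists_one_le_mul_cos_rpow_sub {p : ℝ} (hp : 1 < p) (hp2 : p ≤ 2) :
    ∃ A B : ℝ, 0 ≤ A ∧ ∀ θ : ℝ, |θ| < Real.pi / 2 →
      1 ≤ A * Real.cos θ ^ p - B * Real.cos (p * θ) := by
  have hpi := Real.pi_pos
  obtain ⟨γ, hγ⟩ : ∃ γ, γ = -Real.cos (p * (Real.pi / 2)) := ⟨_, rfl⟩
  have hγ0 : 0 < γ := by
    rw [hγ, neg_pos]
    apply Real.cos_neg_of_pi_div_two_lt_of_lt <;> nlinarith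
  set M := p * Real.pi / γ with hM
  have hM0 : 0 < M := by positivity
  refine ⟨M ^ (p + 1), 2 / γ, by positivity, fun θ hθ => ?_⟩
  have hc : 0 < Real.cos θ := Real.cos_pos_of_mem_Ioo (abs_lt.1 hθ)
  have hcos : 2 / γ * Real.cos (p * θ) ≤ -2 + M * Real.cos θ := by
    calc 2 / γ * Real.cos (p * θ)
        ≤ 2 / γ * (-γ + p * (Real.pi / 2) * Real.cos θ) := by
          gcongr
          simpa [hγ] using cos_mul_le_cos_mul_pi_div_two_add (by linarith) hθ.le
      _ = -2 + M * Real.cos θ := by rw [hM]; field_simp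
  suffices M * Real.cos θ - 1 ≤ M ^ (p + 1) * Real.cos θ ^ p by linarith
  rw [Real.rpow_add_one hM0.ne', mul_right_comm, ← Real.mul_rpow hM0.le hc.le]
  rcases le_or_gt (M * Real.cos θ) 1 with hle | hgt
  · exact (sub_nonpos.2 hle).trans (by positivity)
  · have hone : 1 ≤ (M * Real.cos θ) ^ p := Real.one_le_rpow hgt.le (by linarith)
    calc M * Real.cos θ - 1 ≤ M := by nlinarith [Real.cos_le_one θ]
      _ ≤ (M * Real.cos θ) ^ p * M := le_mul_of_one_le_left hM0.le hone

lemma exists_abs_im_rpow_le {p : ℝ} (hp : 1 < p) (hp2 : p ≤ 2) :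
    ∃ A B : ℝ, 0 ≤ A ∧ ∀ w : ℂ, 0 < w.re →
      |w.im| ^ p ≤ A * w.re ^ p - B * (w ^ (p : ℂ)).re := by
  obtain ⟨A, B, hA, hAB⟩ := exists_one_le_mul_cos_rpow_sub hp hp2
  refine ⟨A, B, hA, fun w hw => ?_⟩
  have hθ : |w.arg| < Real.pi / 2 := Complex.abs_arg_lt_pi_div_two_iff.2 (Or.inl hw)
  have hc : 0 ≤ Real.cos w.arg := (Real.cos_pos_of_mem_Ioo (abs_lt.1 hθ)).le
  calc |w.im| ^ p ≤ ‖w‖ ^ p := by gcongr; exact Complex.abs_im_le_norm w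
    _ ≤ ‖w‖ ^ p * (A * Real.cos w.arg ^ p - B * Real.cos (p * w.arg)) :=
        le_mul_of_one_le_right (by positivity) (hAB _ hθ)
    _ = A * w.re ^ p - B * (w ^ (p : ℂ)).re := by
        rw [Complex.cpow_ofReal_re, ← Complex.norm_mul_cos_arg w,
          Real.mul_rpow (norm_nonneg w) hc, mul_comm w.arg]
        ring

end RieszInequality

section CauchyTransform

lemma radialKernel_two (r s : ℝ) : radialKernel 2 (r, s) = (r ^ 2 + s ^ 2)⁻¹ := by
  simp [radialKernel, Real.rpow_neg_one]

lemma rawPoissonKernel_real (r s : ℝ) : rawPoissonKernel (r, s) = s / (r ^ 2 + s ^ 2) := by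
  simp [rawPoissonKernel, radialKernel_two, div_eq_mul_inv]

lemma rawConjPoissonKernel_real (r s : ℝ) :
    rawConjPoissonKernel 1 (r, s) = r / (r ^ 2 + s ^ 2) := by
  simp [rawConjPoissonKernel, radialKernel_two, div_eq_mul_inv]

/-- The Cauchy transform of `g`, normalised so that its real and imaginary parts are the
Poisson and conjugate Poisson integrals of `g` up to the same factor. -/
def cauchyTransform (g : ℝ → ℝ) (z : ℂ) : ℂ := ∫ t, (g t : ℂ) * (Complex.I / (z - t))

variable {g : ℝ → ℝ} {z : ℂ}

lemma im_le_norm_sub_ofReal (z : ℂ) (t : ℝ) : z.im ≤ ‖z - t‖ := by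
  simpa using (le_abs_self _).trans (Complex.abs_im_le_norm (z - t))

lemma sub_ofReal_ne_zero (hz : 0 < z.im) (t : ℝ) : z - t ≠ 0 :=
  norm_pos_iff.1 (hz.trans_le (im_le_norm_sub_ofReal z t))

lemma I_div_sub_ofReal (z : ℂ) (t : ℝ) :
    Complex.I / (z - t) = ⟨rawPoissonKernel (z.re - t, z.im),
      rawConjPoissonKernel 1 (z.re - t, z.im)⟩ := by
  rw [rawPoissonKernel_real, rawConjPoissonKernel_real]
  apply Complex.ext <;> simp [Complex.div_re, Complex.div_im, Complex.normSq_apply, sq]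

lemma integrable_mul_I_div_sub (hg : Integrable g) (hz : 0 < z.im) :
    Integrable fun t : ℝ => (g t : ℂ) * (Complex.I / (z - t)) := by
  refine hg.ofReal.mul_bdd (c := 1 / z.im) ?_ (.of_forall fun t => ?_)
  · exact (continuous_const.div (by fun_prop) (sub_ofReal_ne_zero hz)).aestronglyMeasurable
  · rw [norm_div, Complex.norm_I]
    gcongr
    exact im_le_norm_sub_ofReal z t

lemma cauchyTransform_re (hg : Integrable g) (hz : 0 < z.im) :
    (cauchyTransform g z).re = kernelConv rawPoissonKernel g (z.re, z.im) := by
  have h := integral_re (𝕜 := ℂ) (integrable_mul_I_div_sub hg hz)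
  simpa [cauchyTransform, kernelConv, I_div_sub_ofReal, mul_comm] using h.symm

lemma cauchyTransform_im (hg : Integrable g) (hz : 0 < z.im) :
    (cauchyTransform g z).im = kernelConv (rawConjPoissonKernel 1) g (z.re, z.im) := by
  have h := integral_im (𝕜 := ℂ) (integrable_mul_I_div_sub hg hz)
  simpa [cauchyTransform, kernelConv, I_div_sub_ofReal, mul_comm] using h.symm

lemma differentiableAt_cauchyTransform (hg : Integrable g) (hz : 0 < z.im) :
    DifferentiableAt ℂ (cauchyTransform g) z := by
  have hball : ∀ w ∈ Metric.ball z (z.im / 2), z.im / 2 < w.im := fun w hw => by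
    have h := (Complex.abs_im_le_norm (w - z)).trans_lt (mem_ball_iff_norm.1 hw)
    rw [Complex.sub_im, abs_lt] at h
    linarith
  have hpos : ∀ w ∈ Metric.ball z (z.im / 2), 0 < w.im := fun w hw =>
    (half_pos hz).trans (hball w hw)
  have hnhds : Metric.ball z (z.im / 2) ∈ 𝓝 z := Metric.ball_mem_nhds z (half_pos hz)
  refine (hasDerivAt_integral_of_dominated_loc_of_deriv_le (μ := volume)
    (F' := fun w t => (g t : ℂ) * (-Complex.I / (w - t) ^ 2))
    (bound := fun t => ‖g t‖ * (1 / (z.im / 2) ^ 2)) hnhds ?_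
    (integrable_mul_I_div_sub hg hz) ?_ (.of_forall fun t w hw => ?_) (hg.norm.mul_const _)
    (.of_forall fun t w hw => ?_)).2.differentiableAt
  · filter_upwards [hnhds] with w hw
    exact (integrable_mul_I_div_sub hg (hpos w hw)).aestronglyMeasurable
  · exact hg.ofReal.aestronglyMeasurable.mul (continuous_const.div (by fun_prop)
      fun t => pow_ne_zero 2 (sub_ofReal_ne_zero hz t)).aestronglyMeasurable
  · rw [norm_mul, Complex.norm_real, norm_div, norm_neg, Complex.norm_I, norm_pow]
    gcongr
    exact (hball w hw).le.trans (im_le_norm_sub_ofReal w t)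
  · have h := (hasDerivAt_const w Complex.I).div ((hasDerivAt_id w).sub_const (t : ℂ))
      (sub_ofReal_ne_zero (hpos w hw) t)
    simpa using h.const_mul (g t : ℂ)

lemma exists_norm_cauchyTransform_le (hg : Integrable g) (hs : HasCompactSupport g) {s : ℝ}
    (h0 : 0 < s) :
    ∃ D, 0 ≤ D ∧ ∀ z : ℂ, s ≤ z.im → ‖cauchyTransform g z‖ ≤ D * (1 + ‖z‖)⁻¹ := by
  obtain ⟨R, hR0, hR⟩ := hs.isBounded.subset_closedBall_lt 0 (0 : ℝ)
  refine ⟨(∫ t, ‖g t‖) * ((1 + R) / s + 1), by positivity, fun z hz => ?_⟩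
  rw [cauchyTransform, mul_assoc, ← integral_mul_const]
  refine norm_integral_le_of_norm_le (hg.norm.mul_const _) (.of_forall fun t => ?_)
  by_cases ht : g t = 0
  · simp [ht]
  have htR : |t| ≤ R := by simpa using hR (subset_tsupport g ht)
  have him : s ≤ ‖z - t‖ := hz.trans (im_le_norm_sub_ofReal z t)
  have hpos : 0 < ‖z - t‖ := h0.trans_le him
  have hnorm : ‖z‖ ≤ ‖z - t‖ + |t| := by simpa using norm_add_le (z - t) (t : ℂ)
  have hR_le : 1 + R ≤ (1 + R) / s * ‖z - t‖ := by
    rw [div_mul_eq_mul_div, le_div_iff₀ h0]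
    gcongr
  rw [norm_mul, Complex.norm_real, norm_div, Complex.norm_I]
  gcongr
  rw [← div_eq_mul_inv, div_le_div_iff₀ hpos (by positivity)]
  linarith

lemma cauchyTransform_re_pos (hg : Continuous g) (hs : HasCompactSupport g) (hg0 : 0 ≤ g)
    (hne : g ≠ 0) (hz : 0 < z.im) : 0 < (cauchyTransform g z).re := by
  obtain ⟨t, ht⟩ := Function.ne_iff.1 hne
  have hpos (t : ℝ) : 0 < rawPoissonKernel ((z.re, z.im) - (t, 0)) := by
    simp only [Prod.mk_sub_mk, sub_zero, rawPoissonKernel_real]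
    positivity
  have hcont := (isHomogeneousKernel_rawPoissonKernel ℝ).continuous_sub (z := (z.re, z.im)) hz
  rw [cauchyTransform_re (hg.integrable_of_hasCompactSupport hs) hz]
  exact (hcont.mul hg).integral_pos_of_hasCompactSupport_nonneg_nonzero hs.mul_left
    (fun t => mul_nonneg (hpos t).le (hg0 t)) (mul_ne_zero (hpos t).ne' ht)

end CauchyTransform

section HorizontalLine

variable {F : Type*} [NormedAddCommGroup F] {Φ : ℂ → F} {p s D : ℝ}

lemma nonneg_of_norm_le_mul_rpow (hD : ∀ z : ℂ, s ≤ z.im → ‖Φ z‖ ≤ D * (1 + ‖z‖) ^ (-p)) :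
    0 ≤ D := by
  have h := (norm_nonneg _).trans (hD (s * Complex.I) (by simp))
  exact nonneg_of_mul_nonneg_left h (by positivity)

lemma norm_le_mul_rpow_of_le_norm (hp : 0 ≤ p)
    (hD : ∀ z : ℂ, s ≤ z.im → ‖Φ z‖ ≤ D * (1 + ‖z‖) ^ (-p)) {N : ℝ} (hN : 0 < N) {z : ℂ}
    (hz : s ≤ z.im) (hzN : N ≤ ‖z‖) : ‖Φ z‖ ≤ D * N ^ (-p) := by
  refine (hD z hz).trans (mul_le_mul_of_nonneg_left ?_ (nonneg_of_norm_le_mul_rpow hD))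
  exact Real.rpow_le_rpow_of_nonpos hN (by linarith) (by linarith)

variable [NormedSpace ℂ F]

lemma continuous_horizontalLine (hd : ∀ z : ℂ, s ≤ z.im → DifferentiableAt ℂ Φ z) :
    Continuous fun x : ℝ => Φ (x + s * Complex.I) :=
  continuous_iff_continuousAt.2 fun x => (hd _ (by simp)).continuousAt.comp
    (f := fun x : ℝ => (x + s * Complex.I : ℂ)) (by fun_prop)

lemma integrable_horizontalLine (hp : 1 < p)
    (hd : ∀ z : ℂ, s ≤ z.im → DifferentiableAt ℂ Φ z)
    (hD : ∀ z : ℂ, s ≤ z.im → ‖Φ z‖ ≤ D * (1 + ‖z‖) ^ (-p)) :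
    Integrable fun x : ℝ => Φ (x + s * Complex.I) := by
  refine ((integrable_one_add_norm (E := ℝ) (by simpa using hp)).const_mul D).mono'
    (continuous_horizontalLine hd).aestronglyMeasurable (.of_forall fun x => ?_)
  refine (hD _ (by simp)).trans (mul_le_mul_of_nonneg_left ?_ (nonneg_of_norm_le_mul_rpow hD))
  refine Real.rpow_le_rpow_of_nonpos (by positivity) ?_ (by linarith)
  simpa using Complex.abs_re_le_norm (x + s * Complex.I)

lemma integral_horizontalLine_eq_sides (hd : ∀ z : ℂ, s ≤ z.im → DifferentiableAt ℂ Φ z) {N : ℝ}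
    (hN : 0 ≤ N) :
    ∫ x in (-N)..N, Φ (x + s * Complex.I)
      = (∫ x in (-N)..N, Φ (x + (s + N : ℝ) * Complex.I))
        - Complex.I • (∫ y in s..(s + N), Φ (N + y * Complex.I))
        + Complex.I • ∫ y in s..(s + N), Φ ((-N : ℝ) + y * Complex.I) := by
  have hrect := Complex.integral_boundary_rect_eq_zero_of_differentiableOn Φ
    (⟨-N, s⟩ : ℂ) (⟨N, s + N⟩ : ℂ) fun z hz => by
      rw [Complex.mem_reProdIm, uIcc_of_le (by linarith : s ≤ s + N)] at hz
      exact (hd z hz.2.1).differentiableWithinAt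
  rw [← sub_eq_zero, ← hrect]
  abel

lemma norm_integral_horizontalLine_le (hp : 0 ≤ p) (hs : 0 ≤ s)
    (hd : ∀ z : ℂ, s ≤ z.im → DifferentiableAt ℂ Φ z)
    (hD : ∀ z : ℂ, s ≤ z.im → ‖Φ z‖ ≤ D * (1 + ‖z‖) ^ (-p)) {N : ℝ} (hN : 0 < N) :
    ‖∫ x in (-N)..N, Φ (x + s * Complex.I)‖ ≤ 4 * D * N ^ (-(p - 1)) := by
  have htop : ‖∫ x in (-N)..N, Φ (x + (s + N : ℝ) * Complex.I)‖ ≤ D * N ^ (-p) * |N - -N| := by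
    refine intervalIntegral.norm_integral_le_of_norm_le_const fun x _ =>
      norm_le_mul_rpow_of_le_norm hp hD hN (by simp [hN.le]) ?_
    have h := (le_abs_self _).trans (Complex.abs_im_le_norm (x + (s + N : ℝ) * Complex.I))
    simp only [Complex.add_im, Complex.ofReal_im, Complex.im_ofReal_mul, Complex.I_im] at h
    linarith
  have hlateral (a : ℝ) (ha : |a| = N) :
      ‖∫ y in s..(s + N), Φ (a + y * Complex.I)‖ ≤ D * N ^ (-p) * |s + N - s| := by
    refine intervalIntegral.norm_integral_le_of_norm_le_const fun y hy => ?_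
    rw [uIoc_of_le (by linarith)] at hy
    refine norm_le_mul_rpow_of_le_norm hp hD hN (by simpa using hy.1.le) ?_
    simpa [ha] using Complex.abs_re_le_norm (a + y * Complex.I)
  have hright := hlateral N (abs_of_pos hN)
  have hleft := hlateral (-N) (by rw [abs_neg, abs_of_pos hN])
  rw [sub_neg_eq_add, abs_of_pos (by linarith)] at htop
  rw [add_sub_cancel_left, abs_of_pos hN] at hright hleft
  have hpow : N ^ (-(p - 1)) = N ^ (-p) * N := by
    rw [← Real.rpow_add_one hN.ne']; ring_nf
  rw [integral_horizontalLine_eq_sides hd hN.le, hpow]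
  refine (norm_add_le_of_le (norm_sub_le _ _) le_rfl).trans ?_
  rw [norm_smul, norm_smul, Complex.norm_I]
  linarith

lemma integral_horizontalLine_eq_zero (hp : 1 < p) (hs : 0 ≤ s)
    (hd : ∀ z : ℂ, s ≤ z.im → DifferentiableAt ℂ Φ z)
    (hD : ∀ z : ℂ, s ≤ z.im → ‖Φ z‖ ≤ D * (1 + ‖z‖) ^ (-p)) :
    ∫ x : ℝ, Φ (x + s * Complex.I) = 0 := by
  refine tendsto_nhds_unique (intervalIntegral_tendsto_integral
    (integrable_horizontalLine hp hd hD) tendsto_neg_atTop_atBot tendsto_id) ?_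
  refine squeeze_zero_norm' (a := fun N : ℝ => 4 * D * N ^ (-(p - 1))) ?_ ?_
  · filter_upwards [eventually_gt_atTop 0] with N hN
    exact norm_integral_horizontalLine_le (by linarith) hs hd hD hN
  · simpa using (tendsto_rpow_neg_atTop (y := p - 1) (by linarith)).const_mul (4 * D)

/-- M. Riesz: integrate `exists_abs_im_rpow_le`; the holomorphic term has integral zero. -/
lemma exists_integral_abs_im_rpow_le (hp : 1 < p) (hp2 : p ≤ 2) :
    ∃ A : ℝ, 0 ≤ A ∧ ∀ (Φ : ℂ → ℂ) (s D : ℝ), 0 ≤ s →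
      (∀ z : ℂ, s ≤ z.im → DifferentiableAt ℂ Φ z) → (∀ z : ℂ, s ≤ z.im → 0 < (Φ z).re) →
      (∀ z : ℂ, s ≤ z.im → ‖Φ z‖ ^ p ≤ D * (1 + ‖z‖) ^ (-p)) →
      ∫ x : ℝ, |(Φ (x + s * Complex.I)).im| ^ p ≤
        A * ∫ x : ℝ, |(Φ (x + s * Complex.I)).re| ^ p := by
  obtain ⟨A, B, hA, hAB⟩ := exists_abs_im_rpow_le hp hp2
  refine ⟨A, hA, fun Φ s D hs hd hre hD => ?_⟩
  have hd_pow : ∀ z : ℂ, s ≤ z.im → DifferentiableAt ℂ (fun z => Φ z ^ (p : ℂ)) z := fun z hz =>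
    (hd z hz).cpow_const (Or.inl (hre z hz))
  simp only [← Complex.norm_cpow_real] at hD
  have hint := integrable_horizontalLine hp hd_pow hD
  have hzero : ∫ x : ℝ, (Φ (x + s * Complex.I) ^ (p : ℂ)).re = 0 :=
    (integral_re (𝕜 := ℂ) hint).trans
      (by rw [integral_horizontalLine_eq_zero hp hs hd_pow hD, map_zero])
  have hdom {φ : ℂ → ℝ} (hφ : Continuous φ) (hle : ∀ w, |φ w| ≤ ‖w‖) :
      Integrable fun x : ℝ => |φ (Φ (x + s * Complex.I))| ^ p := by
    refine hint.norm.mono' ((hφ.comp (continuous_horizontalLine hd)).abs.rpow_const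
      fun _ => Or.inr (by linarith)).aestronglyMeasurable (.of_forall fun x => ?_)
    rw [Complex.norm_cpow_real, Real.norm_of_nonneg (by positivity)]
    exact Real.rpow_le_rpow (abs_nonneg _) (hle _) (by linarith)
  have hint_re := hdom Complex.continuous_re Complex.abs_re_le_norm
  have hint_cpow : Integrable fun x : ℝ => (Φ (x + s * Complex.I) ^ (p : ℂ)).re := hint.re
  calc ∫ x : ℝ, |(Φ (x + s * Complex.I)).im| ^ p
      ≤ ∫ x : ℝ, (A * |(Φ (x + s * Complex.I)).re| ^ p
          - B * (Φ (x + s * Complex.I) ^ (p : ℂ)).re) := by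
        refine integral_mono (hdom Complex.continuous_im Complex.abs_im_le_norm)
          ((hint_re.const_mul A).sub (hint_cpow.const_mul B)) fun x => ?_
        have hpos := hre (x + s * Complex.I) (by simp)
        simpa [abs_of_pos hpos] using hAB _ hpos
    _ = A * ∫ x : ℝ, |(Φ (x + s * Complex.I)).re| ^ p := by
        rw [integral_sub (hint_re.const_mul A) (hint_cpow.const_mul B), integral_const_mul,
          integral_const_mul, hzero, mul_zero, sub_zero]

end HorizontalLine

section LpDuality

variable {α : Type*} [MeasurableSpace α] {μ : Measure α} {p q : ℝ}

lemma lintegral_enorm_mul_le (hpq : p.HolderConjugate q) {f g : α → ℝ}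
    (hf : AEStronglyMeasurable f μ) (hg : AEStronglyMeasurable g μ) :
    ∫⁻ x, ‖f x * g x‖ₑ ∂μ ≤
      eLpNorm f (ENNReal.ofReal p) μ * eLpNorm g (ENNReal.ofReal q) μ := by
  have := hpq.ennrealOfReal
  calc ∫⁻ x, ‖f x * g x‖ₑ ∂μ = eLpNorm (f • g) 1 μ := eLpNorm_one_eq_lintegral_enorm.symm
    _ ≤ _ := eLpNorm_smul_le_mul_eLpNorm hg hf

lemma eLpNorm_abs_rpow_sub_two_mul (hpq : p.HolderConjugate q) (f : α → ℝ) :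
    eLpNorm (fun x => |f x| ^ (p - 2) * f x) (ENNReal.ofReal q) μ =
      eLpNorm f (ENNReal.ofReal p) μ ^ (p - 1) := by
  have hp1 : 0 < p - 1 := hpq.sub_one_pos
  have hnorm (x : α) : ‖|f x| ^ (p - 2) * f x‖ = ‖f x‖ ^ (p - 1) := by
    rw [norm_mul, Real.norm_of_nonneg (by positivity), Real.norm_eq_abs]
    rcases eq_or_ne (f x) 0 with h0 | h0
    · simp [h0, Real.zero_rpow hp1.ne']
    · rw [← Real.rpow_add_one (abs_ne_zero.2 h0)]
      ring_nf
  rw [← eLpNorm_norm, funext hnorm, eLpNorm_norm_rpow f hp1,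
    ← ENNReal.ofReal_mul hpq.symm.nonneg, mul_comm, hpq.sub_one_mul_conj]

lemma memLp_abs_rpow_sub_two_mul (hpq : p.HolderConjugate q) {f : α → ℝ}
    (hf : MemLp f (ENNReal.ofReal p) μ) :
    MemLp (fun x => |f x| ^ (p - 2) * f x) (ENNReal.ofReal q) μ := by
  refine ⟨((hf.1.aemeasurable.abs.pow_const _).mul hf.1.aemeasurable).aestronglyMeasurable, ?_⟩
  rw [eLpNorm_abs_rpow_sub_two_mul hpq]
  exact ENNReal.rpow_lt_top_of_nonneg hpq.sub_one_pos.le hf.2.ne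

lemma enorm_integral_mul_abs_rpow_sub_two_mul (hp : 0 < p) {f : α → ℝ}
    (hf : MemLp f (ENNReal.ofReal p) μ) :
    ‖∫ x, f x * (|f x| ^ (p - 2) * f x) ∂μ‖ₑ = eLpNorm f (ENNReal.ofReal p) μ ^ p := by
  have hpow (x : α) : f x * (|f x| ^ (p - 2) * f x) = ‖f x‖ ^ p := by
    rcases eq_or_ne (f x) 0 with h0 | h0
    · simp [h0, Real.zero_rpow hp.ne']
    · rw [mul_left_comm, ← sq, ← sq_abs, ← Real.rpow_natCast,
        ← Real.rpow_add (abs_pos.2 h0), Real.norm_eq_abs]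
      norm_num
  have hnonneg : 0 ≤ ∫ x, ‖f x‖ ^ p ∂μ := integral_nonneg fun x => by positivity
  rw [funext hpow, hf.eLpNorm_eq_integral_rpow_norm (by simpa using hp) ENNReal.ofReal_ne_top,
    ENNReal.toReal_ofReal hp.le, ENNReal.ofReal_rpow_of_nonneg (by positivity) hp.le,
    Real.rpow_inv_rpow hnonneg hp.ne', Real.enorm_of_nonneg hnonneg]

lemma eLpNorm_le_of_forall_enorm_integral_mul_le (hpq : p.HolderConjugate q) {f : α → ℝ}
    (hf : MemLp f (ENNReal.ofReal p) μ) {B : ℝ≥0∞}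
    (h : ∀ g, MemLp g (ENNReal.ofReal q) μ →
      ‖∫ x, f x * g x ∂μ‖ₑ ≤ B * eLpNorm g (ENNReal.ofReal q) μ) :
    eLpNorm f (ENNReal.ofReal p) μ ≤ B := by
  rcases eq_or_ne (eLpNorm f (ENNReal.ofReal p) μ) 0 with h0 | h0
  · simp [h0]
  have hdual := h _ (memLp_abs_rpow_sub_two_mul hpq hf)
  have hsplit := ENNReal.rpow_add 1 (p - 1) h0 hf.2.ne
  rw [ENNReal.rpow_one, add_sub_cancel] at hsplit
  rw [enorm_integral_mul_abs_rpow_sub_two_mul hpq.pos hf, eLpNorm_abs_rpow_sub_two_mul hpq,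
    hsplit] at hdual
  exact (ENNReal.mul_le_mul_iff_left (by simp [h0, hf.2.ne])
    (ENNReal.rpow_ne_top_of_nonneg hpq.sub_one_pos.le hf.2.ne)).1 hdual

lemma eLpNorm_le_of_integral_rpow_le (hp : 0 < p) {A : ℝ} (hA : 0 ≤ A) {f g : α → ℝ}
    (hf : MemLp f (ENNReal.ofReal p) μ) (hg : MemLp g (ENNReal.ofReal p) μ)
    (h : ∫ x, |f x| ^ p ∂μ ≤ A * ∫ x, |g x| ^ p ∂μ) :
    eLpNorm f (ENNReal.ofReal p) μ ≤ ENNReal.ofReal (A ^ p⁻¹) * eLpNorm g (ENNReal.ofReal p) μ := by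
  have hp0 : ENNReal.ofReal p ≠ 0 := by simpa using hp
  have hnonneg (f : α → ℝ) : 0 ≤ ∫ x, |f x| ^ p ∂μ := integral_nonneg fun x => by positivity
  rw [hf.eLpNorm_eq_integral_rpow_norm hp0 ENNReal.ofReal_ne_top,
    hg.eLpNorm_eq_integral_rpow_norm hp0 ENNReal.ofReal_ne_top,
    ENNReal.toReal_ofReal hp.le, ← ENNReal.ofReal_mul (by positivity),
    ← Real.mul_rpow hA (integral_nonneg fun x => by positivity)]
  exact ENNReal.ofReal_le_ofReal (Real.rpow_le_rpow (hnonneg f) h (by positivity))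

end LpDuality

section KernelConvBound

variable {E : Type*} [NormedAddCommGroup E] [InnerProductSpace ℝ E] [FiniteDimensional ℝ E]
  [MeasurableSpace E] [BorelSpace E] {Ψ : E × ℝ → ℝ} {n : ℕ} {p q : ℝ} {C : ℝ≥0}

/-- The operators `f ↦ kernelConv Ψ f (·, s)`, `s > 0`, are bounded on `L^p` by the same
constant `C`. -/
def KernelConvBound (Ψ : E × ℝ → ℝ) (p : ℝ) (C : ℝ≥0) : Prop :=
  ∀ f : E → ℝ, MemLp f (ENNReal.ofReal p) → ∀ s : ℝ, 0 < s →
    eLpNorm (fun x => kernelConv Ψ f (x, s)) (ENNReal.ofReal p)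
      ≤ C * eLpNorm f (ENNReal.ofReal p)

lemma integral_rawPoissonKernel {t : ℝ} (ht : 0 < t) :
    ∫ y : E, rawPoissonKernel (y, t) = poissonMass (finrank ℝ E) := by
  have h := fourier_rawPoissonKernel ht (0 : E)
  simp only [Real.fourier_eq, inner_zero_right, neg_zero, AddChar.map_zero_eq_one, one_smul,
    norm_zero, mul_zero, Real.exp_zero, mul_one] at h
  exact_mod_cast h

lemma kernelConvBound_rawPoissonKernel (hp : 1 ≤ p) :
    KernelConvBound (E := E) rawPoissonKernel p (poissonMass (finrank ℝ E)).toNNReal := by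
  intro f hf s hs
  have hint := integrable_rawPoissonKernel (E := E) hs
  simp only [kernelConv_eq_convolution]
  refine (eLpNorm_convolution_le (by simpa using hp) ENNReal.ofReal_ne_top hint.1
    hf.1).trans_eq ?_
  have hnonneg (y : E) : 0 ≤ rawPoissonKernel (y, s) :=
    mul_nonneg hs.le (radialKernel_nonneg _ _)
  simp only [Real.enorm_of_nonneg (hnonneg _)]
  rw [← ofReal_integral_eq_lintegral_ofReal hint (.of_forall hnonneg),
    integral_rawPoissonKernel hs]
  rfl

namespace IsHomogeneousKernel

lemma memLp_kernelConv_of_integrable (h : IsHomogeneousKernel n Ψ) (hp : 1 ≤ p)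
    (hn : (finrank ℝ E : ℝ) < n * p) {f : E → ℝ} (hf : Integrable f) {s : ℝ} (hs : 0 < s) :
    MemLp (fun x => kernelConv Ψ f (x, s)) (ENNReal.ofReal p) := by
  have hconv := memLp_convolution (by simpa using hp) ENNReal.ofReal_ne_top hf
    (h.memLp_slice hs hp hn)
  refine (memLp_congr_ae (.of_forall fun x => ?_)).1 hconv
  simp [kernelConv, convolution, mul_comm]

lemma lintegral_enorm_kernel_mul_le (h : IsHomogeneousKernel n Ψ) (hpq : p.HolderConjugate q)
    {f : E → ℝ} (hf : AEStronglyMeasurable f) {s : ℝ} (hs : 0 < s) (x : E) :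
    ∫⁻ y, ‖Ψ ((x, s) - (y, 0)) * f y‖ₑ ≤
      eLpNorm (fun y => Ψ (y, s)) (ENNReal.ofReal q) * eLpNorm f (ENNReal.ofReal p) := by
  have hslice := (h.continuous_slice hs).aestronglyMeasurable (μ := (volume : Measure E))
  have hsub := Measure.measurePreserving_sub_left (volume : Measure E) x
  rw [← eLpNorm_comp_measurePreserving hslice hsub]
  simpa using lintegral_enorm_mul_le hpq.symm (hslice.comp_measurePreserving hsub) hf

lemma integrable_prod_kernel_mul (h : IsHomogeneousKernel n Ψ) (hpq : p.HolderConjugate q)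
    (hn : (finrank ℝ E : ℝ) < n * q) {f g : E → ℝ} (hf : MemLp f (ENNReal.ofReal p))
    (hg : Integrable g) {s : ℝ} (hs : 0 < s) :
    Integrable (fun w : E × E => g w.1 * (Ψ ((w.1, s) - (w.2, 0)) * f w.2)) := by
  have hmeas : AEStronglyMeasurable fun w : E × E => g w.1 * (Ψ ((w.1, s) - (w.2, 0)) * f w.2) :=
    hg.1.comp_fst.mul ((((h.continuous_slice hs).comp (by fun_prop : Continuous fun w : E × E =>
      w.1 - w.2)).aestronglyMeasurable.congr (.of_forall fun w => by simp)).mul hf.1.comp_snd)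
  refine ⟨hmeas, ?_⟩
  rw [HasFiniteIntegral, Measure.volume_eq_prod, lintegral_prod _ hmeas.enorm]
  calc ∫⁻ x, ∫⁻ y, ‖g x * (Ψ ((x, s) - (y, 0)) * f y)‖ₑ
      ≤ ∫⁻ x, ‖g x‖ₑ * (eLpNorm (fun y => Ψ (y, s)) (ENNReal.ofReal q) *
          eLpNorm f (ENNReal.ofReal p)) := by
        refine lintegral_mono fun x => ?_
        simp only [enorm_mul (g x)]
        rw [lintegral_const_mul' _ _ enorm_ne_top]
        gcongr
        exact h.lintegral_enorm_kernel_mul_le hpq hf.1 hs x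
    _ < ⊤ := by
        rw [lintegral_mul_const'' _ hg.1.enorm]
        exact ENNReal.mul_lt_top hg.2
          (ENNReal.mul_lt_top (h.memLp_slice hs hpq.symm.lt.le hn).2 hf.2)

lemma integral_mul_kernelConv (h : IsHomogeneousKernel n Ψ)
    (hodd : ∀ z : E × ℝ, Ψ (-z.1, z.2) = -Ψ z) (hpq : p.HolderConjugate q)
    (hn : (finrank ℝ E : ℝ) < n * q) {f g : E → ℝ} (hf : MemLp f (ENNReal.ofReal p))
    (hg : Integrable g) {s : ℝ} (hs : 0 < s) :
    ∫ x, g x * kernelConv Ψ f (x, s) = -∫ x, kernelConv Ψ g (x, s) * f x := by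
  simp only [kernelConv, ← integral_const_mul, ← integral_mul_const]
  rw [integral_integral_swap (h.integrable_prod_kernel_mul hpq hn hf hg hs), ← integral_neg]
  refine integral_congr_ae (.of_forall fun y => ?_)
  simp only [← integral_neg]
  refine integral_congr_ae (.of_forall fun x => ?_)
  have hneg := hodd ((y, s) - (x, 0))
  simp only [Prod.mk_sub_mk, neg_sub] at hneg ⊢
  rw [hneg]
  ring

lemma tendsto_kernelConv_of_tendsto_eLpNorm {ι : Type*} {l : Filter ι}
    (h : IsHomogeneousKernel n Ψ) (hpq : p.HolderConjugate q) (hn : (finrank ℝ E : ℝ) < n * q)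
    {f : E → ℝ} {g : ι → E → ℝ} (hf : MemLp f (ENNReal.ofReal p))
    (hg : ∀ k, MemLp (g k) (ENNReal.ofReal p))
    (hlim : Tendsto (fun k => eLpNorm (f - g k) (ENNReal.ofReal p)) l (𝓝 0)) {s : ℝ}
    (hs : 0 < s) (x : E) :
    Tendsto (fun k => kernelConv Ψ (g k) (x, s)) l (𝓝 (kernelConv Ψ f (x, s))) := by
  have hbound := ENNReal.Tendsto.const_mul hlim
    (Or.inr (h.memLp_slice hs hpq.symm.lt.le hn).2.ne)
  rw [mul_zero] at hbound
  refine tendsto_iff_edist_tendsto_0.2 (tendsto_of_tendsto_of_tendsto_of_le_of_le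
    tendsto_const_nhds hbound (fun _ => zero_le) fun k => ?_)
  simp only [edist_eq_enorm_sub, kernelConv]
  rw [enorm_sub_rev, ← integral_sub (h.integrable_mul hpq hn hf hs)
    (h.integrable_mul hpq hn (hg k) hs)]
  simp only [← mul_sub]
  exact (enorm_integral_le_lintegral_enorm _).trans
    (h.lintegral_enorm_kernel_mul_le hpq (hf.1.sub (hg k).1) hs x)

lemma kernelConvBound_of_hasCompactSupport (h : IsHomogeneousKernel n Ψ)
    (hpq : p.HolderConjugate q) (hn : (finrank ℝ E : ℝ) < n * q)
    (hC : ∀ f : E → ℝ, Continuous f → HasCompactSupport f → ∀ s : ℝ, 0 < s →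
      eLpNorm (fun x => kernelConv Ψ f (x, s)) (ENNReal.ofReal p)
        ≤ C * eLpNorm f (ENNReal.ofReal p)) :
    KernelConvBound Ψ p C := by
  intro f hf s hs
  have hp : 1 ≤ ENNReal.ofReal p := by simpa using hpq.lt.le
  choose g hg_supp hg_le hg_cont hg_mem using fun k : ℕ =>
    hf.exists_hasCompactSupport_eLpNorm_sub_le ENNReal.ofReal_ne_top
      (ENNReal.inv_ne_zero.2 (ENNReal.natCast_ne_top k))
  have hg_norm (k : ℕ) :
      eLpNorm (g k) (ENNReal.ofReal p) ≤ eLpNorm f (ENNReal.ofReal p) + (k : ℝ≥0∞)⁻¹ := by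
    have h := eLpNorm_sub_le hf.1 (hf.1.sub (hg_mem k).1) hp
    rw [sub_sub_cancel] at h
    exact h.trans (by gcongr; exact hg_le k)
  have hconv (x : E) : Tendsto (fun k => kernelConv Ψ (g k) (x, s)) atTop
      (𝓝 (kernelConv Ψ f (x, s))) :=
    h.tendsto_kernelConv_of_tendsto_eLpNorm hpq hn hf hg_mem
      (tendsto_of_tendsto_of_tendsto_of_le_of_le tendsto_const_nhds
        ENNReal.tendsto_inv_nat_nhds_zero (fun _ => zero_le) hg_le) hs x
  have hlim : Tendsto (fun k : ℕ => C * (eLpNorm f (ENNReal.ofReal p) + (k : ℝ≥0∞)⁻¹)) atTop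
      (𝓝 (C * eLpNorm f (ENNReal.ofReal p))) := by
    simpa using ENNReal.Tendsto.const_mul
      (tendsto_const_nhds.add ENNReal.tendsto_inv_nat_nhds_zero) (Or.inr ENNReal.coe_ne_top)
  have hfatou := Lp.eLpNorm_lim_le_liminf_eLpNorm (μ := volume) (p := ENNReal.ofReal p)
    (fun k => (h.continuous_kernelConv_slice hpq hn (hg_mem k) hs).aestronglyMeasurable) _
    (.of_forall hconv)
  rw [← hlim.liminf_eq]
  refine hfatou.trans (liminf_le_liminf (.of_forall fun k => ?_))
  exact (hC _ (hg_cont k) (hg_supp k) s hs).trans (by gcongr; exact hg_norm k)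

lemma kernelConvBound_of_holderConjugate (h : IsHomogeneousKernel n Ψ)
    (hodd : ∀ z : E × ℝ, Ψ (-z.1, z.2) = -Ψ z) (hpq : p.HolderConjugate q)
    (hnp : (finrank ℝ E : ℝ) < n * p) (hnq : (finrank ℝ E : ℝ) < n * q)
    (hC : KernelConvBound Ψ q C) : KernelConvBound Ψ p C := by
  refine h.kernelConvBound_of_hasCompactSupport hpq hnq fun f hf hf_supp s hs => ?_
  have hf_int : Integrable f := hf.integrable_of_hasCompactSupport hf_supp
  refine eLpNorm_le_of_forall_enorm_integral_mul_le hpq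
    (h.memLp_kernelConv_of_integrable hpq.lt.le hnp hf_int hs) fun g hg => ?_
  have hswap := h.integral_mul_kernelConv hodd hpq.symm hnp hg hf_int hs
  rw [← neg_eq_iff_eq_neg.2 hswap, enorm_neg]
  refine ((enorm_integral_le_lintegral_enorm _).trans
    (lintegral_enorm_mul_le hpq hf.aestronglyMeasurable
      (h.continuous_kernelConv_slice hpq.symm hnp hg hs).aestronglyMeasurable)).trans ?_
  rw [mul_right_comm, mul_comm]
  gcongr
  exact hC g hg s hs

end IsHomogeneousKernel

end KernelConvBound

namespace IsHomogeneousKernel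

variable {E : Type*} [NormedAddCommGroup E] [NormedSpace ℝ E] [FiniteDimensional ℝ E]
  [MeasureSpace E] [BorelSpace E] [(volume : Measure E).IsAddHaarMeasure]
  {n : ℕ} {Ψ : E × ℝ → ℝ} {f g : E → ℝ} {p q : ℝ}

lemma kernelConv_sub (h : IsHomogeneousKernel n Ψ) (hpq : p.HolderConjugate q)
    (hn : (finrank ℝ E : ℝ) < n * q) (hf : MemLp f (ENNReal.ofReal p))
    (hg : MemLp g (ENNReal.ofReal p)) {z : E × ℝ} (hz : 0 < z.2) :
    kernelConv Ψ (f - g) z = kernelConv Ψ f z - kernelConv Ψ g z := by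
  simp only [kernelConv, Pi.sub_apply, mul_sub]
  exact integral_sub (h.integrable_mul hpq hn hf hz) (h.integrable_mul hpq hn hg hz)

lemma eLpNorm_kernelConv_sub_le (h : IsHomogeneousKernel n Ψ) (hpq : p.HolderConjugate q)
    (hn : (finrank ℝ E : ℝ) < n * q) (hf : MemLp f (ENNReal.ofReal p))
    (hg : MemLp g (ENNReal.ofReal p)) {s : ℝ} (hs : 0 < s) :
    eLpNorm (fun x => kernelConv Ψ (f - g) (x, s)) (ENNReal.ofReal p) ≤
      eLpNorm (fun x => kernelConv Ψ f (x, s)) (ENNReal.ofReal p) +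
        eLpNorm (fun x => kernelConv Ψ g (x, s)) (ENNReal.ofReal p) := by
  simp only [h.kernelConv_sub hpq hn hf hg (z := (_, s)) hs]
  exact eLpNorm_sub_le (h.continuous_kernelConv_slice hpq hn hf hs).aestronglyMeasurable
    (h.continuous_kernelConv_slice hpq hn hg hs).aestronglyMeasurable (by simpa using hpq.lt.le)

end IsHomogeneousKernel

section HilbertKernel

variable {g : ℝ → ℝ} {p s : ℝ}

lemma exists_norm_cauchyTransform_rpow_le (hg : Integrable g) (hgs : HasCompactSupport g)
    (hp : 0 ≤ p) (hs : 0 < s) :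
    ∃ D, ∀ z : ℂ, s ≤ z.im → ‖cauchyTransform g z‖ ^ p ≤ D * (1 + ‖z‖) ^ (-p) := by
  obtain ⟨D, hD0, hD⟩ := exists_norm_cauchyTransform_le hg hgs hs
  refine ⟨D ^ p, fun z hz => (Real.rpow_le_rpow (norm_nonneg _) (hD z hz) hp).trans_eq ?_⟩
  rw [Real.mul_rpow hD0 (by positivity), Real.inv_rpow (by positivity),
    Real.rpow_neg (by positivity)]

lemma exists_forall_nonneg_eLpNorm_kernelConv_le (hp : 1 < p) (hp2 : p ≤ 2) :
    ∃ C : ℝ≥0, ∀ g : ℝ → ℝ, Continuous g → HasCompactSupport g → 0 ≤ g → ∀ s : ℝ, 0 < s →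
      eLpNorm (fun x => kernelConv (rawConjPoissonKernel 1) g (x, s)) (ENNReal.ofReal p)
        ≤ C * eLpNorm g (ENNReal.ofReal p) := by
  obtain ⟨A, hA, hriesz⟩ := exists_integral_abs_im_rpow_le hp hp2
  refine ⟨(A ^ p⁻¹).toNNReal * (poissonMass (finrank ℝ ℝ)).toNNReal,
    fun g hg hg_supp hg0 s hs => ?_⟩
  have hg_int : Integrable g := hg.integrable_of_hasCompactSupport hg_supp
  have hp' : (finrank ℝ ℝ : ℝ) < finrank ℝ ℝ * p := finrank_lt_mul le_rfl hp
  have hP := (isHomogeneousKernel_rawPoissonKernel ℝ).memLp_kernelConv_of_integrable hp.le hp'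
    hg_int hs
  have hQ := (isHomogeneousKernel_rawConjPoissonKernel (1 : ℝ)).memLp_kernelConv_of_integrable
    hp.le hp' hg_int hs
  have hle : ∫ x, |kernelConv (rawConjPoissonKernel 1) g (x, s)| ^ p ≤
      A * ∫ x, |kernelConv rawPoissonKernel g (x, s)| ^ p := by
    rcases eq_or_ne g 0 with rfl | hne
    · simp [kernelConv, Real.zero_rpow (by linarith : p ≠ 0)]
    obtain ⟨D, hD⟩ := exists_norm_cauchyTransform_rpow_le hg_int hg_supp (by linarith : 0 ≤ p) hs
    simpa [cauchyTransform_re hg_int, cauchyTransform_im hg_int, hs] using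
      hriesz (cauchyTransform g) s D hs.le
        (fun z hz => differentiableAt_cauchyTransform hg_int (hs.trans_le hz))
        (fun z hz => cauchyTransform_re_pos hg hg_supp hg0 hne (hs.trans_le hz)) hD
  refine (eLpNorm_le_of_integral_rpow_le (by linarith) hA hQ hP hle).trans ?_
  rw [ENNReal.coe_mul, mul_assoc]
  gcongr
  · rfl
  · exact kernelConvBound_rawPoissonKernel hp.le g
      (hg.memLp_of_hasCompactSupport hg_supp) s hs

lemma exists_kernelConvBound_of_le_two (hp : 1 < p) (hp2 : p ≤ 2) :
    ∃ C, KernelConvBound (rawConjPoissonKernel (1 : ℝ)) p C := by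
  obtain ⟨C, hC⟩ := exists_forall_nonneg_eLpNorm_kernelConv_le hp hp2
  have hpq := Real.HolderConjugate.conjExponent hp
  have hn : (finrank ℝ ℝ : ℝ) < finrank ℝ ℝ * p.conjExponent := finrank_lt_mul le_rfl hpq.symm.lt
  have hQ := isHomogeneousKernel_rawConjPoissonKernel (1 : ℝ)
  refine ⟨C + C, hQ.kernelConvBound_of_hasCompactSupport hpq hn fun g hg hg_supp s hs => ?_⟩
  have hpos : Continuous g⁺ := hg.sup continuous_const
  have hneg : Continuous g⁻ := hg.neg.sup continuous_const
  have hpos_supp : HasCompactSupport g⁺ := hg_supp.comp_left (g := fun r => r⁺) posPart_zero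
  have hneg_supp : HasCompactSupport g⁻ := hg_supp.comp_left (g := fun r => r⁻) negPart_zero
  have hsub := hQ.eLpNorm_kernelConv_sub_le hpq hn (hpos.memLp_of_hasCompactSupport hpos_supp)
    (hneg.memLp_of_hasCompactSupport hneg_supp) hs
  rw [posPart_sub_negPart] at hsub
  rw [ENNReal.coe_add, add_mul]
  refine hsub.trans (add_le_add ((hC _ hpos hpos_supp (posPart_nonneg g) s hs).trans ?_)
    ((hC _ hneg hneg_supp (negPart_nonneg g) s hs).trans ?_)) <;>
  · gcongr
    refine eLpNorm_mono fun x => ?_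
    rw [Real.norm_eq_abs, Real.norm_eq_abs, ← posPart_add_negPart (g x)]
    simp [abs_of_nonneg, posPart_nonneg, negPart_nonneg]

lemma rawConjPoissonKernel_neg {E : Type*} [NormedAddCommGroup E] [InnerProductSpace ℝ E] (v : E)
    (z : E × ℝ) : rawConjPoissonKernel v (-z.1, z.2) = -rawConjPoissonKernel v z := by
  simp [rawConjPoissonKernel, radialKernel]

lemma exists_kernelConvBound_rawConjPoissonKernel_real (hp : 1 < p) :
    ∃ C, KernelConvBound (rawConjPoissonKernel (1 : ℝ)) p C := by
  rcases le_total p 2 with hp2 | hp2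
  · exact exists_kernelConvBound_of_le_two hp hp2
  have hpq := Real.HolderConjugate.conjExponent hp
  have hq2 : p.conjExponent ≤ 2 := by
    rw [Real.conjExponent, div_le_iff₀ (by linarith)]
    linarith
  obtain ⟨C, hC⟩ := exists_kernelConvBound_of_le_two hpq.symm.lt hq2
  exact ⟨C, (isHomogeneousKernel_rawConjPoissonKernel 1).kernelConvBound_of_holderConjugate
    (rawConjPoissonKernel_neg 1) hpq (finrank_lt_mul le_rfl hp) (finrank_lt_mul le_rfl hpq.symm.lt)
    hC⟩

end HilbertKernel

section GaussianHilbertKernel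

variable {s p : ℝ}

/-- The kernel `r ↦ e^{-s²/r²} / r` on the line, a truncation at scale `s` of the Hilbert kernel
`1 / r`. Integrating it along the lines through a point against a Gaussian weight produces the
conjugate Poisson kernels in every dimension. -/
def gaussHilbertKernel (s r : ℝ) : ℝ := Real.exp (-(s ^ 2 / r ^ 2)) / r

lemma measurable_gaussHilbertKernel (s : ℝ) : Measurable (gaussHilbertKernel s) := by
  unfold gaussHilbertKernel
  fun_prop

lemma abs_one_sub_exp_neg_sq_mul_le {b : ℝ} (hb : 0 ≤ b) :
    |1 - Real.exp (-b ^ 2) * (1 + b ^ 2)| ≤ b := by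
  have hexp : Real.exp (-b ^ 2) * (1 + b ^ 2) ≤ 1 := by
    rw [Real.exp_neg, inv_mul_le_one₀ (Real.exp_pos _)]
    linarith [Real.add_one_le_exp (b ^ 2)]
  rw [abs_of_nonneg (sub_nonneg.2 hexp)]
  rcases le_total 1 b with h | h
  · have : 0 ≤ Real.exp (-b ^ 2) * (1 + b ^ 2) := by positivity
    linarith
  · have hmul : (-b ^ 2 + 1) * (1 + b ^ 2) ≤ Real.exp (-b ^ 2) * (1 + b ^ 2) := by
      gcongr
      exact Real.add_one_le_exp _
    have hpow : b ^ 4 ≤ b := by simpa using pow_le_pow_of_le_one hb h (by norm_num : 1 ≤ 4)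
    nlinarith

lemma abs_gaussHilbertKernel_sub_le (hs : 0 < s) (r : ℝ) :
    |gaussHilbertKernel s r - rawConjPoissonKernel 1 (r, s)| ≤ rawPoissonKernel (r, s) := by
  rw [rawConjPoissonKernel_real, rawPoissonKernel_real, gaussHilbertKernel]
  rcases eq_or_ne r 0 with rfl | hr
  · simpa using by positivity
  have hr' : |r| ≠ 0 := abs_ne_zero.2 hr
  have hratio : s ^ 2 / r ^ 2 = (s / |r|) ^ 2 := by rw [div_pow, sq_abs]
  have hdiff : Real.exp (-(s ^ 2 / r ^ 2)) / r - r / (r ^ 2 + s ^ 2) =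
      -(r / (r ^ 2 + s ^ 2) *
        (1 - Real.exp (-(s / |r|) ^ 2) * (1 + (s / |r|) ^ 2))) := by
    rw [hratio, div_pow, sq_abs]
    field_simp
    ring
  rw [hdiff, abs_neg, abs_mul, abs_div, abs_of_pos (by positivity : 0 < r ^ 2 + s ^ 2)]
  calc |r| / (r ^ 2 + s ^ 2) * |1 - Real.exp (-(s / |r|) ^ 2) * (1 + (s / |r|) ^ 2)|
      ≤ |r| / (r ^ 2 + s ^ 2) * (s / |r|) := by
        gcongr
        exact abs_one_sub_exp_neg_sq_mul_le (by positivity)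
    _ = s / (r ^ 2 + s ^ 2) := by field_simp

lemma abs_integral_gaussHilbertKernel_sub_le (hs : 0 < s) {g : ℝ → ℝ} (hg : MemLp g 2) (x : ℝ) :
    |(∫ r, gaussHilbertKernel s r * g (x - r)) - kernelConv (rawConjPoissonKernel 1) g (x, s)| ≤
      kernelConv rawPoissonKernel (fun y => |g y|) (x, s) := by
  have hg2 : MemLp g (ENNReal.ofReal 2) := by simpa using hg
  have hn : (finrank ℝ ℝ : ℝ) < finrank ℝ ℝ * 2 := finrank_lt_mul le_rfl one_lt_two
  have hQ := (isHomogeneousKernel_rawConjPoissonKernel (1 : ℝ)).integrable_slice_mul .two_two hn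
    hg2 hs x
  have hP : Integrable fun r => rawPoissonKernel (r, s) * |g (x - r)| :=
    (isHomogeneousKernel_rawPoissonKernel ℝ).integrable_slice_mul .two_two hn hg2.abs hs x
  have hle (r : ℝ) : ‖(gaussHilbertKernel s r - rawConjPoissonKernel 1 (r, s)) * g (x - r)‖ ≤
      rawPoissonKernel (r, s) * |g (x - r)| := by
    rw [norm_mul, Real.norm_eq_abs, Real.norm_eq_abs]
    gcongr
    exact abs_gaussHilbertKernel_sub_le hs r
  have hmeas : AEStronglyMeasurable (fun r => g (x - r)) volume :=
    hg.1.comp_measurePreserving (Measure.measurePreserving_sub_left volume x)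
  have hdiff := hP.mono' (((measurable_gaussHilbertKernel s).aestronglyMeasurable.sub
    ((isHomogeneousKernel_rawConjPoissonKernel (1 : ℝ)).continuous_slice
      hs).aestronglyMeasurable).mul hmeas) (.of_forall hle)
  have hG : Integrable (fun r => gaussHilbertKernel s r * g (x - r)) :=
    (hdiff.add hQ).congr (.of_forall fun r => by simp [sub_mul])
  rw [kernelConv_eq_integral_slice, kernelConv_eq_integral_slice, ← integral_sub hG hQ]
  simp only [← sub_mul]
  exact norm_integral_le_of_norm_le hP (.of_forall hle)

lemma exists_eLpNorm_integral_gaussHilbertKernel_le (hp : 1 < p) :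
    ∃ C : ℝ≥0, ∀ g : ℝ → ℝ, Continuous g → HasCompactSupport g → ∀ s : ℝ, 0 < s →
      eLpNorm (fun x => ∫ r, gaussHilbertKernel s r * g (x - r)) (ENNReal.ofReal p)
        ≤ C * eLpNorm g (ENNReal.ofReal p) := by
  obtain ⟨C, hC⟩ := exists_kernelConvBound_rawConjPoissonKernel_real hp
  refine ⟨C + (poissonMass (finrank ℝ ℝ)).toNNReal, fun g hg hg_supp s hs => ?_⟩
  have hgp : MemLp g (ENNReal.ofReal p) := hg.memLp_of_hasCompactSupport hg_supp
  have hpq := Real.HolderConjugate.conjExponent hp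
  have hn : (finrank ℝ ℝ : ℝ) < finrank ℝ ℝ * p.conjExponent := finrank_lt_mul le_rfl hpq.symm.lt
  have hQ := (isHomogeneousKernel_rawConjPoissonKernel (1 : ℝ)).continuous_kernelConv_slice hpq hn
    hgp hs
  have hP := (isHomogeneousKernel_rawPoissonKernel ℝ).continuous_kernelConv_slice hpq hn
    hgp.abs hs
  have hpoint (x : ℝ) : ‖∫ r, gaussHilbertKernel s r * g (x - r)‖ ≤
      |kernelConv (rawConjPoissonKernel 1) g (x, s)| +
        kernelConv rawPoissonKernel (fun y => |g y|) (x, s) := by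
    have h := abs_integral_gaussHilbertKernel_sub_le hs
      (hg.memLp_of_hasCompactSupport hg_supp) x
    have := abs_sub_abs_le_abs_sub (∫ r, gaussHilbertKernel s r * g (x - r))
      (kernelConv (rawConjPoissonKernel 1) g (x, s))
    rw [Real.norm_eq_abs]
    linarith
  have hPg := kernelConvBound_rawPoissonKernel hp.le (fun y => |g y|) hgp.abs s hs
  have habs : eLpNorm (fun y => |g y|) (ENNReal.ofReal p) = eLpNorm g (ENNReal.ofReal p) :=
    eLpNorm_norm g
  rw [habs] at hPg
  have hQg : eLpNorm (fun x => |kernelConv (rawConjPoissonKernel 1) g (x, s)|)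
      (ENNReal.ofReal p) ≤ C * eLpNorm g (ENNReal.ofReal p) :=
    (eLpNorm_norm (fun x => kernelConv (rawConjPoissonKernel 1) g (x, s))).trans_le (hC g hgp s hs)
  rw [ENNReal.coe_add, add_mul]
  refine (eLpNorm_mono_real hpoint).trans ((eLpNorm_add_le hQ.abs.aestronglyMeasurable
    hP.aestronglyMeasurable (by simpa using hp.le)).trans (add_le_add hQg hPg))

end GaussianHilbertKernel

section Lines

variable {E : Type*} [NormedAddCommGroup E] [InnerProductSpace ℝ E] {y : E}

lemma lintegral_indicator_Ico_inner_sub_smul (hy : y ≠ 0) (x : E) :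
    ∫⁻ τ : ℝ, {x : E | inner ℝ x y / ‖y‖ ^ 2 ∈ Ico (0 : ℝ) 1}.indicator 1 (x - τ • y)
      = (1 : ℝ≥0∞) := by
  have : ‖y‖ ^ 2 ≠ 0 := by simpa using hy
  have hslice (τ : ℝ) : inner ℝ (x - τ • y) y / ‖y‖ ^ 2 = inner ℝ x y / ‖y‖ ^ 2 - τ := by
    rw [inner_sub_left, real_inner_smul_left, real_inner_self_eq_norm_sq]
    field_simp
  have hind (τ : ℝ) : {x : E | inner ℝ x y / ‖y‖ ^ 2 ∈ Ico (0 : ℝ) 1}.indicator 1 (x - τ • y) =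
      (Ioc (inner ℝ x y / ‖y‖ ^ 2 - 1) (inner ℝ x y / ‖y‖ ^ 2)).indicator
        (1 : ℝ → ℝ≥0∞) τ := by
    simp only [indicator_apply, mem_ofPred_eq, hslice, mem_Ico, mem_Ioc, Pi.one_apply, sub_nonneg,
      sub_lt_comm, and_comm]
  simp only [hind]
  rw [lintegral_indicator_one measurableSet_Ioc]
  simp

variable [FiniteDimensional ℝ E] [MeasurableSpace E] [BorelSpace E]

lemma lintegral_eq_lintegral_strip_mul_lintegral_line (hy : y ≠ 0) {G : E → ℝ≥0∞}
    (hG : Measurable G) :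
    ∫⁻ x, G x = ∫⁻ x, {x : E | inner ℝ x y / ‖y‖ ^ 2 ∈ Ico (0 : ℝ) 1}.indicator 1 x *
      ∫⁻ τ : ℝ, G (x + τ • y) := by
  have hχ : Measurable ({x : E | inner ℝ x y / ‖y‖ ^ 2 ∈ Ico (0 : ℝ) 1}.indicator
      (1 : E → ℝ≥0∞)) := by
    have : Measurable fun x : E => inner ℝ x y / ‖y‖ ^ 2 := by fun_prop
    exact measurable_one.indicator (this measurableSet_Ico)
  set χ : E → ℝ≥0∞ := {x : E | inner ℝ x y / ‖y‖ ^ 2 ∈ Ico (0 : ℝ) 1}.indicator 1 with hχ_def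
  have hG₂ : Measurable fun w : E × ℝ => G (w.1 + w.2 • y) := hG.comp (by fun_prop)
  have hχ₂ : Measurable fun w : ℝ × E => χ (w.2 - w.1 • y) := hχ.comp (by fun_prop)
  symm
  calc ∫⁻ x, χ x * ∫⁻ τ : ℝ, G (x + τ • y)
      = ∫⁻ x, ∫⁻ τ : ℝ, χ x * G (x + τ • y) := lintegral_congr fun x =>
        (lintegral_const_mul _ (hG.comp (by fun_prop))).symm
    _ = ∫⁻ τ : ℝ, ∫⁻ x, χ x * G (x + τ • y) :=
        lintegral_lintegral_swap ((hχ.comp measurable_fst).mul hG₂).aemeasurable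
    _ = ∫⁻ τ : ℝ, ∫⁻ x, χ (x - τ • y) * G x := lintegral_congr fun τ => by
        rw [← lintegral_sub_right_eq_self _ (τ • y)]
        simp
    _ = ∫⁻ x, ∫⁻ τ : ℝ, χ (x - τ • y) * G x :=
        lintegral_lintegral_swap (hχ₂.mul (hG.comp measurable_snd)).aemeasurable
    _ = ∫⁻ x, G x := lintegral_congr fun x => by
        rw [lintegral_mul_const (f := fun τ : ℝ => χ (x - τ • y)) _ (hχ.comp (by fun_prop)), hχ_def,
          lintegral_indicator_Ico_inner_sub_smul hy, one_mul]

lemma measurable_integral_line {k : ℝ → ℝ} (hk : Measurable k) {f : E → ℝ} (hf : Continuous f) :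
    Measurable fun w : E × E => ∫ r, k r * f (w.1 - r • w.2) := by
  have h : Measurable (Function.uncurry fun (w : E × E) (r : ℝ) => k r * f (w.1 - r • w.2)) :=
    (hk.comp measurable_snd).mul (hf.comp (by fun_prop :
      Continuous fun w : (E × E) × ℝ => w.1.1 - w.2 • w.1.2)).measurable
  exact (h.stronglyMeasurable.integral_prod_right (ν := volume)).measurable

lemma eLpNorm_le_coe_mul_eLpNorm_iff {α β : Type*} [MeasurableSpace α] [MeasurableSpace β]
    {μ : Measure α} {ν : Measure β} {p : ℝ} (hp : 0 < p) {C : ℝ≥0} {f : α → ℝ} {g : β → ℝ} :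
    eLpNorm f (ENNReal.ofReal p) μ ≤ C * eLpNorm g (ENNReal.ofReal p) ν ↔
      ∫⁻ x, ‖f x‖ₑ ^ p ∂μ ≤ C ^ p * ∫⁻ x, ‖g x‖ₑ ^ p ∂ν := by
  have hp0 : ENNReal.ofReal p ≠ 0 := by simpa using hp
  rw [← ENNReal.rpow_le_rpow_iff hp, ENNReal.mul_rpow_of_nonneg _ _ hp.le,
    eLpNorm_eq_lintegral_rpow_enorm_toReal hp0 ENNReal.ofReal_ne_top,
    eLpNorm_eq_lintegral_rpow_enorm_toReal hp0 ENNReal.ofReal_ne_top, ENNReal.toReal_ofReal hp.le,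
    one_div, ENNReal.rpow_inv_rpow hp.ne', ENNReal.rpow_inv_rpow hp.ne']

lemma eLpNorm_integral_line_le {p : ℝ} (hp : 0 < p) {k : ℝ → ℝ} (hk : Measurable k) {C : ℝ≥0}
    (hC : ∀ g : ℝ → ℝ, Continuous g → HasCompactSupport g →
      eLpNorm (fun x => ∫ r, k r * g (x - r)) (ENNReal.ofReal p)
        ≤ C * eLpNorm g (ENNReal.ofReal p))
    (hy : y ≠ 0) {f : E → ℝ} (hf : Continuous f) (hf_supp : HasCompactSupport f) :
    eLpNorm (fun x => ∫ r, k r * f (x - r • y)) (ENNReal.ofReal p)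
      ≤ C * eLpNorm f (ENNReal.ofReal p) := by
  rw [eLpNorm_le_coe_mul_eLpNorm_iff hp]
  have hmeas : Measurable fun x => ∫ r, k r * f (x - r • y) :=
    (measurable_integral_line hk hf).comp (by fun_prop : Measurable fun x : E => (x, y))
  rw [lintegral_eq_lintegral_strip_mul_lintegral_line hy (hmeas.enorm.pow_const p),
    lintegral_eq_lintegral_strip_mul_lintegral_line hy (hf.measurable.enorm.pow_const p),
    ← lintegral_const_mul' _ _ (by finiteness)]
  refine lintegral_mono fun x => ?_
  rw [mul_left_comm]
  gcongr
  have hline : Topology.IsClosedEmbedding fun τ : ℝ => x + τ • y :=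
    (Homeomorph.addLeft x).isClosedEmbedding.comp (isClosedEmbedding_smul_left hy)
  have h := (eLpNorm_le_coe_mul_eLpNorm_iff hp).1
    (hC (fun τ => f (x + τ • y)) (by fun_prop) (hf_supp.comp_isClosedEmbedding hline))
  simpa [sub_smul, add_sub_assoc] using h

end Lines

section Dilations

variable {E : Type*} [NormedAddCommGroup E] [NormedSpace ℝ E] [FiniteDimensional ℝ E]
  [MeasureSpace E] [BorelSpace E] [(volume : Measure E).IsAddHaarMeasure]

lemma integral_abs_pow_finrank_mul_comp_smul (F : E → ℝ) {r : ℝ} (hr : r ≠ 0) :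
    ∫ y, |r| ^ finrank ℝ E * F (r • y) = ∫ y, F y := by
  have hpow : |r| ^ finrank ℝ E ≠ 0 := pow_ne_zero _ (abs_ne_zero.2 hr)
  rw [integral_const_mul, Measure.integral_comp_smul, smul_eq_mul, abs_inv, abs_pow,
    mul_inv_cancel_left₀ hpow]

variable {A : E → ℝ → ℝ}

lemma integrable_abs_pow_finrank_mul_comp_smul (hA : Measurable (Function.uncurry A))
    (hAi : Integrable (Function.uncurry A)) :
    Integrable (Function.uncurry fun y r => |r| ^ finrank ℝ E * A (r • y) r) := by
  have hmeas : Measurable (Function.uncurry fun y r => |r| ^ finrank ℝ E * A (r • y) r) :=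
    (by fun_prop : Measurable fun w : E × ℝ => |w.2| ^ finrank ℝ E).mul
      (hA.comp (by fun_prop : Measurable fun w : E × ℝ => (w.2 • w.1, w.2)))
  obtain ⟨hslice, hnorm⟩ := (integrable_prod_iff' hA.aestronglyMeasurable).1 hAi
  have hne : ∀ᵐ r : ℝ, r ≠ 0 := Measure.ae_ne volume 0
  refine (integrable_prod_iff' hmeas.aestronglyMeasurable).2 ⟨?_, hnorm.congr ?_⟩
  · filter_upwards [hslice, hne] with r hr hr0
    exact (hr.comp_smul hr0).const_mul (|r| ^ finrank ℝ E)
  · filter_upwards [hne] with r hr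
    simpa [abs_pow] using (integral_abs_pow_finrank_mul_comp_smul (fun y => ‖A y r‖) hr).symm

lemma integral_integral_abs_pow_finrank_mul_comp_smul (hA : Measurable (Function.uncurry A))
    (hAi : Integrable (Function.uncurry A)) :
    ∫ y, ∫ r, |r| ^ finrank ℝ E * A (r • y) r = ∫ y, ∫ r, A y r := by
  rw [integral_integral_swap (integrable_abs_pow_finrank_mul_comp_smul hA hAi),
    integral_integral_swap hAi]
  refine integral_congr_ae ?_
  filter_upwards [Measure.ae_ne volume (0 : ℝ)] with r hr
  exact integral_abs_pow_finrank_mul_comp_smul (fun y => A y r) hr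

end Dilations

section Rotations

variable {E : Type*} [NormedAddCommGroup E]

lemma integral_inv_abs_pow_mul_exp_neg_div_sq (n : ℕ) {z : E × ℝ} (hz : z ≠ 0) :
    ∫ r : ℝ, (|r| ^ (n + 2))⁻¹ * Real.exp (-((‖z.1‖ ^ 2 + z.2 ^ 2) / r ^ 2)) =
      Real.Gamma ((n + 1) / 2) * radialKernel (n + 1) z := by
  have heven := integral_comp_abs
    (f := fun r : ℝ => (r ^ (n + 2))⁻¹ * Real.exp (-((‖z.1‖ ^ 2 + z.2 ^ 2) / r ^ 2)))
  simp only [sq_abs] at heven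
  have hinv := integral_comp_rpow_Ioi
    (fun r : ℝ => r ^ n * Real.exp (-(‖z.1‖ ^ 2 + z.2 ^ 2) * r ^ 2)) (p := -1) (by norm_num)
  rw [integral_pow_mul_exp_neg_mul_sq n hz] at hinv
  have hsubst : ∫ r in Ioi (0 : ℝ),
      (r ^ (n + 2))⁻¹ * Real.exp (-((‖z.1‖ ^ 2 + z.2 ^ 2) / r ^ 2)) =
      Real.Gamma ((n + 1) / 2) / 2 * radialKernel (n + 1) z := by
    rw [← hinv]
    refine setIntegral_congr_fun measurableSet_Ioi fun r hr => ?_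
    have hr' : (0 : ℝ) < r := hr
    simp only [Real.rpow_neg_one, smul_eq_mul]
    rw [show (-1 - 1 : ℝ) = -(2 : ℕ) by norm_num, Real.rpow_neg hr'.le, Real.rpow_natCast,
      abs_neg, abs_one, one_mul, inv_pow, inv_pow, ← mul_assoc, ← mul_inv, pow_add,
      mul_comm (r ^ 2), neg_mul, div_eq_mul_inv]
  rw [heven, hsubst]
  ring

lemma integrable_inv_abs_pow_mul_exp_neg_div_sq (n : ℕ) {z : E × ℝ} (hz : z ≠ 0) :
    Integrable fun r : ℝ => (|r| ^ (n + 2))⁻¹ * Real.exp (-((‖z.1‖ ^ 2 + z.2 ^ 2) / r ^ 2)) := by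
  refine .of_integral_ne_zero ?_
  rw [integral_inv_abs_pow_mul_exp_neg_div_sq n hz, radialKernel]
  have := Real.Gamma_pos_of_pos (s := ((n : ℝ) + 1) / 2) (by positivity)
  have := normSq_add_sq_pos hz
  positivity

variable [InnerProductSpace ℝ E]

/-- The function `(y, r) ↦ |r|^{-n - 2} e^{-(|y|² + s²)/r²} ⟪v, y⟫`, `n = dim E`. Its integral in
`r` is a multiple of the conjugate Poisson kernel at `(y, s)`, and the dilation `y ↦ r y` turns it
into a Gaussian weight in `y` times `gaussHilbertKernel s r`. -/
def rotationKernel (v : E) (s : ℝ) (y : E) (r : ℝ) : ℝ :=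
  (|r| ^ (finrank ℝ E + 2))⁻¹ * Real.exp (-((‖y‖ ^ 2 + s ^ 2) / r ^ 2)) * inner ℝ v y

variable {f : E → ℝ} {s p : ℝ}

lemma abs_pow_mul_rotationKernel_smul (v : E) (s : ℝ) (y : E) (r : ℝ) :
    |r| ^ finrank ℝ E * rotationKernel v s (r • y) r =
      inner ℝ v y * Real.exp (-‖y‖ ^ 2) * gaussHilbertKernel s r := by
  rcases eq_or_ne r 0 with rfl | hr
  · simp [rotationKernel, gaussHilbertKernel]
  have : |r| ≠ 0 := abs_ne_zero.2 hr
  have hexp : -((‖r • y‖ ^ 2 + s ^ 2) / r ^ 2) = -‖y‖ ^ 2 + -(s ^ 2 / r ^ 2) := by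
    rw [norm_smul, mul_pow, Real.norm_eq_abs, sq_abs]
    field_simp
    ring
  rw [rotationKernel, gaussHilbertKernel, hexp, Real.exp_add, pow_add, sq_abs, inner_smul_right]
  field_simp

lemma integrable_rotationKernel (v : E) (hs : 0 < s) (y : E) :
    Integrable (rotationKernel v s y) :=
  (integrable_inv_abs_pow_mul_exp_neg_div_sq _ (z := (y, s)) (ne_zero_of_snd_pos hs)).mul_const _

lemma integral_rotationKernel (v : E) (hs : 0 < s) (y : E) :
    ∫ r, rotationKernel v s y r =
      Real.Gamma ((finrank ℝ E + 1) / 2) * rawConjPoissonKernel v (y, s) := by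
  have h := integral_inv_abs_pow_mul_exp_neg_div_sq (finrank ℝ E) (z := (y, s))
    (ne_zero_of_snd_pos hs)
  simp only [rotationKernel, rawConjPoissonKernel, integral_mul_const]
  rw [h]
  ring

lemma integral_abs_rotationKernel (v : E) (hs : 0 < s) (y : E) :
    ∫ r, |rotationKernel v s y r| =
      Real.Gamma ((finrank ℝ E + 1) / 2) * |rawConjPoissonKernel v (y, s)| := by
  have h := integral_inv_abs_pow_mul_exp_neg_div_sq (finrank ℝ E) (z := (y, s))
    (ne_zero_of_snd_pos hs)
  have habs (r : ℝ) : |(|r| ^ (finrank ℝ E + 2))⁻¹ * Real.exp (-((‖y‖ ^ 2 + s ^ 2) / r ^ 2))| =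
      (|r| ^ (finrank ℝ E + 2))⁻¹ * Real.exp (-((‖y‖ ^ 2 + s ^ 2) / r ^ 2)) :=
    abs_of_nonneg (by positivity)
  simp only [rotationKernel, rawConjPoissonKernel, abs_mul _ (inner ℝ v _), habs,
    integral_mul_const, abs_mul (inner ℝ v _), abs_of_nonneg (radialKernel_nonneg _ _)]
  rw [h]
  ring

variable [FiniteDimensional ℝ E] [MeasurableSpace E] [BorelSpace E]

lemma measurable_rotationKernel (v : E) (s : ℝ) :
    Measurable (Function.uncurry (rotationKernel v s)) := by
  unfold rotationKernel Function.uncurry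
  fun_prop

lemma integrable_inner_mul_exp_neg_sq (v : E) :
    Integrable fun y : E => inner ℝ v y * Real.exp (-‖y‖ ^ 2) := by
  have hgauss : Integrable fun y : E => Real.exp (-(1 / 2 : ℝ) * ‖y‖ ^ 2) := by
    refine .of_integral_ne_zero ?_
    rw [GaussianFourier.integral_rexp_neg_mul_sq_norm (by norm_num)]
    positivity
  refine (hgauss.const_mul ‖v‖).mono' (by fun_prop) (.of_forall fun y => ?_)
  have hy : ‖y‖ ≤ Real.exp ((1 / 2 : ℝ) * ‖y‖ ^ 2) := by
    nlinarith [sq_nonneg (‖y‖ - 1), Real.add_one_le_exp ((1 / 2 : ℝ) * ‖y‖ ^ 2)]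
  calc ‖inner ℝ v y * Real.exp (-‖y‖ ^ 2)‖
      ≤ ‖v‖ * ‖y‖ * Real.exp (-‖y‖ ^ 2) := by
        rw [norm_mul, Real.norm_of_nonneg (Real.exp_pos _).le]
        gcongr
        exact norm_inner_le_norm v y
    _ ≤ ‖v‖ * Real.exp ((1 / 2 : ℝ) * ‖y‖ ^ 2) * Real.exp (-‖y‖ ^ 2) := by gcongr
    _ = ‖v‖ * Real.exp (-(1 / 2 : ℝ) * ‖y‖ ^ 2) := by
        rw [mul_assoc, ← Real.exp_add]
        ring_nf

variable [Nontrivial E]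

lemma integrable_rotationKernel_mul (hf : Continuous f) (hf_supp : HasCompactSupport f)
    (hs : 0 < s) (v x : E) :
    Integrable (Function.uncurry fun (y : E) (r : ℝ) => rotationKernel v s y r * f (x - y)) := by
  have hmeas : Measurable (Function.uncurry fun (y : E) (r : ℝ) =>
      rotationKernel v s y r * f (x - y)) := (measurable_rotationKernel v s).mul
    (hf.measurable.comp (by fun_prop : Measurable fun w : E × ℝ => x - w.1))
  have hQ := (isHomogeneousKernel_rawConjPoissonKernel v).integrable_slice_mul .two_two
    (finrank_lt_mul le_rfl one_lt_two) (hf.memLp_of_hasCompactSupport hf_supp) hs x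
  refine (integrable_prod_iff hmeas.aestronglyMeasurable).2 ⟨.of_forall fun y => ?_, ?_⟩
  · exact (integrable_rotationKernel v hs y).mul_const (f (x - y))
  · refine (hQ.norm.const_mul (Real.Gamma ((finrank ℝ E + 1) / 2))).congr (.of_forall fun y => ?_)
    simp only [Function.uncurry_apply_pair, norm_mul,
      Real.norm_eq_abs, integral_mul_const, integral_abs_rotationKernel v hs]
    ring

lemma gamma_mul_kernelConv_rawConjPoissonKernel (hf : Continuous f) (hf_supp : HasCompactSupport f)
    (hs : 0 < s) (v x : E) :
    Real.Gamma ((finrank ℝ E + 1) / 2) * kernelConv (rawConjPoissonKernel v) f (x, s) =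
      ∫ y : E, (inner ℝ v y * Real.exp (-‖y‖ ^ 2)) •
        ∫ r, gaussHilbertKernel s r * f (x - r • y) := by
  have hmeas : Measurable (Function.uncurry fun (y : E) (r : ℝ) =>
      rotationKernel v s y r * f (x - y)) := (measurable_rotationKernel v s).mul
    (hf.measurable.comp (by fun_prop : Measurable fun w : E × ℝ => x - w.1))
  have hdilate := integral_integral_abs_pow_finrank_mul_comp_smul hmeas
    (integrable_rotationKernel_mul hf hf_supp hs v x)
  simp only [← mul_assoc, abs_pow_mul_rotationKernel_smul, integral_mul_const,
    integral_rotationKernel v hs] at hdilate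
  rw [kernelConv_eq_integral_slice, ← integral_const_mul]
  simp only [← mul_assoc, ← hdilate, smul_eq_mul, ← integral_const_mul]

lemma exists_kernelConvBound_rawConjPoissonKernel (hp : 1 < p) (v : E) :
    ∃ C, KernelConvBound (rawConjPoissonKernel v) p C := by
  obtain ⟨C, hC⟩ := exists_eLpNorm_integral_gaussHilbertKernel_le hp
  have hpq := Real.HolderConjugate.conjExponent hp
  have hweight := integrable_inner_mul_exp_neg_sq v
  set γ := Real.Gamma ((finrank ℝ E + 1) / 2)
  have hγ : 0 < γ := Real.Gamma_pos_of_pos (by positivity)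
  set N := ∫⁻ y : E, ‖inner ℝ v y * Real.exp (-‖y‖ ^ 2)‖ₑ
  have hN : N ≠ ⊤ := hweight.2.ne
  refine ⟨‖γ⁻¹‖₊ * (N.toNNReal * C),
    (isHomogeneousKernel_rawConjPoissonKernel v).kernelConvBound_of_hasCompactSupport hpq
      (finrank_lt_mul le_rfl hpq.symm.lt) fun f hf hf_supp s hs => ?_⟩
  have hline : ∀ᵐ y : E, eLpNorm (fun x => ∫ r, gaussHilbertKernel s r * f (x - r • y))
      (ENNReal.ofReal p) ≤ C * eLpNorm f (ENNReal.ofReal p) := by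
    filter_upwards [Measure.ae_ne volume (0 : E)] with y hy
    exact eLpNorm_integral_line_le (by linarith) (measurable_gaussHilbertKernel s)
      (fun g hg hg_supp => hC g hg hg_supp s hs) hy hf hf_supp
  have hrep : (fun x => kernelConv (rawConjPoissonKernel v) f (x, s)) = γ⁻¹ • fun x =>
      ∫ y : E, (inner ℝ v y * Real.exp (-‖y‖ ^ 2)) •
        ∫ r, gaussHilbertKernel s r * f (x - r • y) := by
    funext x
    rw [Pi.smul_apply, ← gamma_mul_kernelConv_rawConjPoissonKernel hf hf_supp hs v x, smul_eq_mul,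
      inv_mul_cancel_left₀ hγ.ne']
  have haverage := eLpNorm_integral_smul_le (μ := volume) (by simpa using hp.le)
    ENNReal.ofReal_ne_top hweight.1.aemeasurable
    (measurable_integral_line (measurable_gaussHilbertKernel s) hf).aestronglyMeasurable hline
  rw [hrep, eLpNorm_const_smul]
  push_cast
  rw [ENNReal.coe_toNNReal hN, mul_assoc, mul_assoc]
  gcongr
  rfl

end Rotations

lemma eLpNorm_const_mul {α : Type*} [MeasurableSpace α] (c : ℝ) (g : α → ℝ) (r : ℝ≥0∞)
    (μ : Measure α) : eLpNorm (fun x => c * g x) r μ = ‖c‖ₑ * eLpNorm g r μ :=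
  eLpNorm_const_smul c g r μ

section RieszTransform

variable {E : Type*} [NormedAddCommGroup E] [InnerProductSpace ℝ E] [FiniteDimensional ℝ E]
  [MeasurableSpace E] [BorelSpace E] {n : ℕ} {p q : ℝ} {v : E} {a a' b b' : E → ℝ}

/-- `b` is the Riesz transform along `v` of `a ∈ L^p`, up to normalisation: the conjugate Poisson
integral of `a` converges pointwise to `b` at the boundary. -/
structure HasRieszTransform (v : E) (p : ℝ) (a b : E → ℝ) : Prop where
  memLp : MemLp a (ENNReal.ofReal p)
  tendsto : ∀ x, Tendsto (fun s => kernelConv (rawConjPoissonKernel v) a (x, s)) (𝓝[>] 0) (𝓝 (b x))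

namespace HasRieszTransform

lemma const_mul (h : HasRieszTransform v p a b) (c : ℝ) :
    HasRieszTransform v p (fun x => c * a x) (fun x => c * b x) where
  memLp := h.memLp.const_mul c
  tendsto x := by
    have hlin (s : ℝ) : kernelConv (rawConjPoissonKernel v) (fun x => c * a x) (x, s) =
        c * kernelConv (rawConjPoissonKernel v) a (x, s) := by
      simp only [kernelConv, mul_left_comm _ c, integral_const_mul]
    simpa only [hlin] using (h.tendsto x).const_mul c

lemma add [Nontrivial E] (hp : 1 < p) (h : HasRieszTransform v p a b)
    (h' : HasRieszTransform v p a' b') :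
    HasRieszTransform v p (fun x => a x + a' x) (fun x => b x + b' x) where
  memLp := h.memLp.add h'.memLp
  tendsto x := by
    have hpq := Real.HolderConjugate.conjExponent hp
    have hQ := isHomogeneousKernel_rawConjPoissonKernel v
    have hn := finrank_lt_mul (E := E) le_rfl hpq.symm.lt
    refine ((h.tendsto x).add (h'.tendsto x)).congr' ?_
    filter_upwards [self_mem_nhdsWithin] with s (hs : 0 < s)
    simp only [kernelConv, mul_add]
    exact (integral_add (hQ.integrable_mul hpq hn h.memLp (z := (x, s)) hs)
      (hQ.integrable_mul hpq hn h'.memLp (z := (x, s)) hs)).symm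

lemma finset_sum [Nontrivial E] (hp : 1 < p) {ι : Type*} (s : Finset ι) {a b : ι → E → ℝ}
    (h : ∀ i, HasRieszTransform v p (a i) (b i)) :
    HasRieszTransform v p (fun x => ∑ i ∈ s, a i x) (fun x => ∑ i ∈ s, b i x) := by
  classical
  induction s using Finset.induction_on with
  | empty => exact ⟨by simp, fun x => by simp [kernelConv]⟩
  | insert i s hi ih => simpa only [Finset.sum_insert hi] using (h i).add hp ih

lemma eLpNorm_le [Nontrivial E] (hp : 1 < p) (h : HasRieszTransform v p a b) {C : ℝ≥0}
    (hC : KernelConvBound (rawConjPoissonKernel v) p C) :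
    eLpNorm b (ENNReal.ofReal p) ≤ C * eLpNorm a (ENNReal.ofReal p) := by
  have hpq := Real.HolderConjugate.conjExponent hp
  obtain ⟨s, -, hs_pos, hs⟩ := exists_seq_strictAnti_tendsto (0 : ℝ)
  have hs' : Tendsto s atTop (𝓝[>] 0) := tendsto_nhdsWithin_iff.2 ⟨hs, .of_forall hs_pos⟩
  have hmeas (k : ℕ) : AEStronglyMeasurable
      (fun x => kernelConv (rawConjPoissonKernel v) a (x, s k)) :=
    ((isHomogeneousKernel_rawConjPoissonKernel v).continuous_kernelConv_slice hpq
      (finrank_lt_mul le_rfl hpq.symm.lt) h.memLp (hs_pos k)).aestronglyMeasurable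
  refine (Lp.eLpNorm_lim_le_liminf_eLpNorm hmeas b
    (.of_forall fun x => (h.tendsto x).comp hs')).trans ?_
  refine (liminf_le_liminf (.of_forall fun k => hC a h.memLp (s k) (hs_pos k))).trans ?_
  simp

end HasRieszTransform

lemma IsRieszPair.hasRieszTransform [Nontrivial E] {A B : E × ℝ → ℝ} {f : E → ℝ}
    (h : IsRieszPair v n A B) (hn : finrank ℝ E < n) (hp : 1 < p)
    (hf : MemLp f (ENNReal.ofReal p)) {t : ℝ} (ht : 0 < t) :
    HasRieszTransform v p (fun x => kernelConv A f (x, t))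
      (fun x => poissonMass (finrank ℝ E) * kernelConv B f (x, t)) where
  memLp := h.left.memLp_kernelConv hn (by simpa using hp.le) ENNReal.ofReal_ne_top hf ht
  tendsto := h.tendsto_kernelConv_kernelConv hn (.conjExponent hp) hf ht

end RieszTransform

section ScaledDivergence

variable {E ι : Type*} [Fintype ι] [NormedAddCommGroup E] [InnerProductSpace ℝ E]
  [FiniteDimensional ℝ E] [MeasurableSpace E] [BorelSpace E]
  {n : ℕ} {p : ℝ} {Ψ : E × ℝ → ℝ} {f : ι → E → ℝ} {b : ι → E}

lemma IsHomogeneousKernel.snd_mul_fderiv {E : Type*} [NormedAddCommGroup E] [NormedSpace ℝ E]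
    {Ψ : E × ℝ → ℝ} (h : IsHomogeneousKernel n Ψ) (v : E) :
    IsHomogeneousKernel n (fun w => w.2 * fderiv ℝ Ψ w (v, 0)) :=
  (h.fderiv_apply (v, 0)).clm_mul (.snd ℝ E ℝ)

/-- The function `t ∑ i, ∂_{b i} (Ψ(·, t) ∗ f i)` on `E × (0, ∞)`, the derivatives being put on the
kernel. For an orthonormal basis `b` and the components `f i` of a vector field it is `t` times the
divergence of the smoothed field. -/
def scaledDivConv (b : ι → E) (Ψ : E × ℝ → ℝ) (f : ι → E → ℝ) (z : E × ℝ) : ℝ :=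
  ∑ i, kernelConv (fun w => w.2 * fderiv ℝ Ψ w (b i, 0)) (f i) z

lemma differentiableAt_scaledDivConv [Nontrivial E] (h : IsHomogeneousKernel n Ψ)
    (hn : finrank ℝ E ≤ n) (hp : 1 < p) (hf : ∀ i, MemLp (f i) (ENNReal.ofReal p)) {z : E × ℝ}
    (hz : 0 < z.2) :
    DifferentiableAt ℝ (scaledDivConv b Ψ f) z := by
  have hpq := Real.HolderConjugate.conjExponent hp
  exact DifferentiableAt.fun_sum fun i _ => (h.snd_mul_fderiv (b i)).differentiableAt_kernelConv hpq
    (finrank_lt_mul hn hpq.symm.lt) (hf i) hz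

lemma fderiv_kernelConv_snd_mul_fderiv [Nontrivial E] (h : IsHomogeneousKernel n Ψ)
    (hn : finrank ℝ E ≤ n) (hp : 1 < p) {g : E → ℝ} (hg : MemLp g (ENNReal.ofReal p)) (v : E)
    {z : E × ℝ} (hz : 0 < z.2) (e : E × ℝ) :
    fderiv ℝ (kernelConv (fun w => w.2 * fderiv ℝ Ψ w (v, 0)) g) z e =
      e.2 * kernelConv (fun w => fderiv ℝ Ψ w (v, 0)) g z +
        z.2 * kernelConv (fun w => fderiv ℝ (fun u => fderiv ℝ Ψ u (v, 0)) w e) g z := by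
  have hpq := Real.HolderConjugate.conjExponent hp
  have hn' := finrank_lt_mul (hn.trans n.le_succ) hpq.symm.lt
  have h' := h.fderiv_apply (v, 0)
  have hscale : kernelConv (fun w => w.2 * fderiv ℝ Ψ w (v, 0)) g =
      fun z => z.2 * kernelConv (fun w => fderiv ℝ Ψ w (v, 0)) g z := by
    ext z
    simp [kernelConv, mul_assoc, integral_const_mul]
  have hdiff := h'.differentiableAt_kernelConv hpq hn' hg hz
  rw [hscale, fderiv_fun_mul differentiableAt_snd hdiff, ← h'.fderiv_kernelConv hpq hn' hg hz]
  simp [fderiv_snd]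
  ring

lemma fderiv_scaledDivConv [Nontrivial E] (h : IsHomogeneousKernel n Ψ)
    (hn : finrank ℝ E ≤ n) (hp : 1 < p) (hf : ∀ i, MemLp (f i) (ENNReal.ofReal p)) {z : E × ℝ}
    (hz : 0 < z.2) (e : E × ℝ) :
    fderiv ℝ (scaledDivConv b Ψ f) z e =
      ∑ i, (e.2 * kernelConv (fun w => fderiv ℝ Ψ w (b i, 0)) (f i) z +
        z.2 * kernelConv (fun w => fderiv ℝ (fun u => fderiv ℝ Ψ u (b i, 0)) w e) (f i) z) := by
  have hpq := Real.HolderConjugate.conjExponent hp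
  have hsum := HasFDerivAt.fun_sum (u := Finset.univ) fun i _ =>
    ((h.snd_mul_fderiv (b i)).differentiableAt_kernelConv hpq
      (finrank_lt_mul hn hpq.symm.lt) (hf i) hz).hasFDerivAt
  have hderiv : fderiv ℝ (scaledDivConv b Ψ f) z = _ := hsum.fderiv
  rw [hderiv, sum_apply]
  exact Finset.sum_congr rfl fun i _ => fderiv_kernelConv_snd_mul_fderiv h hn hp (hf i) (b i) hz e

lemma hasRieszTransform_fderiv_scaledDivConv [Nontrivial E] (hp : 1 < p)
    (hf : ∀ i, MemLp (f i) (ENNReal.ofReal p)) (b : ι → E) (v : E) {t : ℝ} (ht : 0 < t)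
    (e : E × ℝ) :
    HasRieszTransform v p (fun x => fderiv ℝ (scaledDivConv b rawPoissonKernel f) (x, t) e)
      (fun x => poissonMass (finrank ℝ E) *
        fderiv ℝ (scaledDivConv b (rawConjPoissonKernel v) f) (x, t) e) := by
  have hPQ := isRieszPair_raw v
  have hsummand (i : ι) : HasRieszTransform v p _ _ :=
    (((hPQ.fderiv_apply le_rfl (b i, 0)).hasRieszTransform (Nat.lt_succ_self _) hp (hf i)
      ht).const_mul e.2).add hp
    ((((hPQ.fderiv_apply le_rfl (b i, 0)).fderiv_apply (Nat.le_succ _) e).hasRieszTransform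
      (by lia) hp (hf i) ht).const_mul t)
  convert HasRieszTransform.finset_sum hp Finset.univ hsummand using 2 with x x
  · exact fderiv_scaledDivConv hPQ.left le_rfl hp hf ht e
  · rw [fderiv_scaledDivConv hPQ.right le_rfl hp hf ht e, Finset.mul_sum]
    exact Finset.sum_congr rfl fun i _ => by ring

lemma exists_eLpNorm_fderiv_scaledDivConv_le [Nontrivial E] (hp : 1 < p) (v : E) :
    ∃ C : ℝ≥0, ∀ (b : ι → E) (f : ι → E → ℝ), (∀ i, MemLp (f i) (ENNReal.ofReal p)) →
      ∀ t : ℝ, 0 < t → ∀ e : E × ℝ,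
        eLpNorm (fun x => fderiv ℝ (scaledDivConv b (rawConjPoissonKernel v) f) (x, t) e)
            (ENNReal.ofReal p) ≤
          C * eLpNorm (fun x => fderiv ℝ (scaledDivConv b rawPoissonKernel f) (x, t) e)
            (ENNReal.ofReal p) := by
  obtain ⟨C, hC⟩ := exists_kernelConvBound_rawConjPoissonKernel hp v
  have hκ := (poissonMass_pos (finrank ℝ E)).ne'
  refine ⟨‖(poissonMass (finrank ℝ E))⁻¹‖₊ * C, fun b f hf t ht e => ?_⟩
  have h := (hasRieszTransform_fderiv_scaledDivConv hp hf b v ht e).const_mul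
    (poissonMass (finrank ℝ E))⁻¹
  simp only [inv_mul_cancel_left₀ hκ] at h
  refine (h.eLpNorm_le hp hC).trans_eq ?_
  rw [eLpNorm_const_mul, enorm_eq_nnnorm]
  push_cast
  ring

end ScaledDivergence

section EuclideanFields

variable {ι α : Type*} [Fintype ι] [MeasurableSpace α] {μ : Measure α} {r : ℝ≥0∞}

lemma eLpNorm_le_sum_eLpNorm_apply (hr : 1 ≤ r) {w : α → EuclideanSpace ℝ ι}
    (hw : AEStronglyMeasurable w μ) : eLpNorm w r μ ≤ ∑ i, eLpNorm (fun x => w x i) r μ := by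
  classical
  have hsum : w = ∑ i, fun x => EuclideanSpace.single i (w x i) := by
    ext x j
    simp [Finset.sum_apply]
  have hnorm (i : ι) : eLpNorm (fun x => EuclideanSpace.single i (w x i)) r μ =
      eLpNorm (fun x => w x i) r μ := eLpNorm_congr_norm_ae (.of_forall fun x => by simp)
  have hmeas (i : ι) : AEStronglyMeasurable (fun x => EuclideanSpace.single i (w x i)) μ :=
    (Isometry.continuous (PiLp.edist_single_same 2 (fun _ => ℝ) i)).comp_aestronglyMeasurable
      ((EuclideanSpace.proj i).continuous.comp_aestronglyMeasurable hw)
  conv_lhs => rw [hsum]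
  simpa only [hnorm] using eLpNorm_sum_le (s := Finset.univ) (fun i _ => hmeas i) hr

lemma eLpNorm_le_of_forall_eLpNorm_sub_apply_le (hr : 1 ≤ r) {u U : α → EuclideanSpace ℝ ι}
    (hu : AEStronglyMeasurable u μ) (hU : AEStronglyMeasurable U μ) {C : ℝ≥0}
    (h : ∀ i, eLpNorm (fun x => (u x - U x) i) r μ ≤ C * eLpNorm U r μ) :
    eLpNorm u r μ ≤ (1 + Fintype.card ι * C : ℝ≥0) * eLpNorm U r μ := by
  have hsub : eLpNorm (u - U) r μ ≤ (Fintype.card ι * C : ℝ≥0) * eLpNorm U r μ := by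
    refine (eLpNorm_le_sum_eLpNorm_apply hr (hu.sub hU)).trans
      ((Finset.sum_le_sum fun i _ => h i).trans_eq ?_)
    simp [mul_assoc]
  calc eLpNorm u r μ = eLpNorm (U + (u - U)) r μ := by rw [add_sub_cancel]
    _ ≤ eLpNorm U r μ + eLpNorm (u - U) r μ := eLpNorm_add_le hU (hu.sub hU) hr
    _ ≤ eLpNorm U r μ + (Fintype.card ι * C : ℝ≥0) * eLpNorm U r μ := by gcongr
    _ = (1 + Fintype.card ι * C : ℝ≥0) * eLpNorm U r μ := by push_cast; ring

lemma fderiv_euclidean_apply {ι V : Type*} [Finite ι] [NormedAddCommGroup V]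
    [NormedSpace ℝ V] {G : V → EuclideanSpace ℝ ι} {z : V} (hG : DifferentiableAt ℝ G z)
    (e : V) (i : ι) :
    (fderiv ℝ G z e) i = fderiv ℝ (fun w => G w i) z e := by
  cases nonempty_fintype ι
  have h := (EuclideanSpace.proj (𝕜 := ℝ) i).hasFDerivAt.comp z hG.hasFDerivAt
  exact (DFunLike.congr_fun h.fderiv e).symm

end EuclideanFields

section PoissonIntegrals

variable {d : ℕ} {p : ℝ} {f : Ed d → Ed d}

lemma appendZero_apply_castSucc (f : Ed d → Ed d) (y : Ed d) (j : Fin d) :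
    appendZero d f y j.castSucc = f y j := by
  simp [appendZero, EuclideanSpace.equiv]

lemma appendZero_apply_last (f : Ed d → Ed d) (y : Ed d) :
    appendZero d f y (Fin.last d) = 0 := by
  simp [appendZero, EuclideanSpace.equiv]

lemma div_normSq_add_sq_rpow (n : ℕ) (a : ℝ) (z : Ed d × ℝ) :
    a / (‖z.1‖ ^ 2 + z.2 ^ 2) ^ ((n : ℝ) / 2) = a * radialKernel n z := by
  rw [radialKernel, neg_div, Real.rpow_neg (by positivity), div_eq_mul_inv]

lemma halfSpacePoissonKernel_eq (t : ℝ) (y : Ed d) :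
    halfSpacePoissonKernel d t y = 2 / sphereVol d * rawPoissonKernel (y, t) := by
  have h := div_normSq_add_sq_rpow (d + 1) (2 / sphereVol d * t) (y, t)
  push_cast at h
  rw [halfSpacePoissonKernel, h, rawPoissonKernel, finrank_euclideanSpace_fin, mul_assoc]

/-- The kernel `w_i / |w|^(d+1)` on `ℝ^d × (0, ∞) ⊆ ℝ^(d+1)`, up to a constant the `i`-th partial
derivative of the Newtonian potential. The last one is the Poisson kernel, the others are the
conjugate Poisson kernels along the coordinate axes. -/
def coordKernel (d : ℕ) (i : Fin (d + 1)) (w : Ed d × ℝ) : ℝ :=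
  snocVec d w.1 w.2 i * radialKernel (d + 1) w

lemma coordKernel_castSucc (j : Fin d) :
    coordKernel d j.castSucc = rawConjPoissonKernel (EuclideanSpace.single j 1) := by
  ext w
  simp [coordKernel, snocVec, rawConjPoissonKernel, EuclideanSpace.inner_single_left]

lemma coordKernel_last : coordKernel d (Fin.last d) = rawPoissonKernel := by
  ext w
  simp [coordKernel, snocVec, rawPoissonKernel]

lemma isHomogeneousKernel_coordKernel (i : Fin (d + 1)) :
    IsHomogeneousKernel d (coordKernel d i) := by
  cases i using Fin.lastCases with
  | last => simpa [coordKernel_last] using isHomogeneousKernel_rawPoissonKernel (Ed d)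
  | cast j =>
    simpa [coordKernel_castSucc] using
      isHomogeneousKernel_rawConjPoissonKernel (EuclideanSpace.single j (1 : ℝ))

lemma fderiv_coordKernel {z : Ed d × ℝ} (hz : z ≠ 0) (i : Fin (d + 1)) (k : Fin d) :
    fderiv ℝ (coordKernel d i) z (EuclideanSpace.single k 1, 0) =
      (if i = k.castSucc then radialKernel (d + 1) z else 0) -
        (d + 1) * snocVec d z.1 z.2 i * z.1 k * radialKernel (d + 3) z := by
  cases i using Fin.lastCases with
  | last =>
    rw [coordKernel_last, fderiv_rawPoissonKernel hz]
    simp [snocVec, EuclideanSpace.inner_single_right, (Fin.castSucc_lt_last k).ne']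
  | cast j =>
    rw [coordKernel_castSucc, fderiv_rawConjPoissonKernel _ hz]
    rcases eq_or_ne j k with rfl | hjk
    · simp [snocVec, EuclideanSpace.inner_single_left, EuclideanSpace.inner_single_right]
    · simp [snocVec, EuclideanSpace.inner_single_left, EuclideanSpace.inner_single_right, hjk,
        hjk.symm]

lemma pEntry_eq {t : ℝ} (ht : 0 < t) (i : Fin (d + 1)) (k : Fin d) (y : Ed d) :
    pEntry d t i k.castSucc y =
      2 / sphereVol d * ((if i = k.castSucc then rawPoissonKernel (y, t) else 0) -
        t * fderiv ℝ (coordKernel d i) (y, t) (EuclideanSpace.single k 1, 0)) := by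
  have h := div_normSq_add_sq_rpow (d + 3) (2 * ((d : ℝ) + 1) / sphereVol d * t *
    snocVec d y t i * snocVec d y t k.castSucc) (y, t)
  push_cast at h
  have hk : snocVec d y t k.castSucc = y k := by simp [snocVec]
  rw [pEntry, h, fderiv_coordKernel (ne_zero_of_snd_pos (z := (y, t)) ht), hk, rawPoissonKernel,
    finrank_euclideanSpace_fin]
  split_ifs <;> ring

lemma memLp_appendZero_apply (hf : MemLp f (ENNReal.ofReal p)) (i : Fin (d + 1)) :
    MemLp (fun y => appendZero d f y i) (ENNReal.ofReal p) := by
  cases i using Fin.lastCases with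
  | last => simp [appendZero_apply_last]
  | cast j => simpa only [appendZero_apply_castSucc] using hf.eval_piLp j

lemma poissonInt_apply [Nontrivial (Ed d)] (hp : 1 < p) {m : ℕ} {F : Ed d → Ed m}
    (hF : ∀ i, MemLp (fun y => F y i) (ENNReal.ofReal p)) {z : Ed d × ℝ} (hz : 0 < z.2)
    (i : Fin m) :
    poissonInt d m F z.1 z.2 i =
      2 / sphereVol d * kernelConv rawPoissonKernel (fun y => F y i) z := by
  have hpq := Real.HolderConjugate.conjExponent hp
  have hint (i : Fin m) :
      Integrable fun y => (halfSpacePoissonKernel d z.2 y • F (z.1 - y)) i := by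
    simpa [halfSpacePoissonKernel_eq, mul_assoc] using
      ((isHomogeneousKernel_rawPoissonKernel (Ed d)).integrable_slice_mul hpq
        (finrank_lt_mul le_rfl hpq.symm.lt) (hF i) hz z.1).const_mul (2 / sphereVol d)
  rw [poissonInt, eval_integral_piLp hint, kernelConv_eq_integral_slice, ← integral_const_mul]
  simp [halfSpacePoissonKernel_eq, mul_assoc]

/-- The convolution of the kernel `coordKernel d i` with the divergence of `f`, times `t`. -/
def scaledDivCoordConv (f : Ed d → Ed d) (i : Fin (d + 1)) : Ed d × ℝ → ℝ :=
  scaledDivConv (fun k => EuclideanSpace.single k 1) (coordKernel d i) fun k y => f y k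

lemma pConv_appendZero_apply [Nontrivial (Ed d)] (hp : 1 < p) (hf : MemLp f (ENNReal.ofReal p))
    {z : Ed d × ℝ} (hz : 0 < z.2) (i : Fin (d + 1)) :
    pConv d z.2 (appendZero d f) z.1 i =
      2 / sphereVol d * (kernelConv rawPoissonKernel (fun y => appendZero d f y i) z -
        scaledDivCoordConv f i z) := by
  have hpq := Real.HolderConjugate.conjExponent hp
  have hn := finrank_lt_mul (E := Ed d) le_rfl hpq.symm.lt
  rw [finrank_euclideanSpace_fin] at hn
  have hP := (isHomogeneousKernel_rawPoissonKernel (Ed d)).integrable_slice_mul hpq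
    (by simpa using hn) (memLp_appendZero_apply hf i) hz z.1
  have hD (k : Fin d) := ((isHomogeneousKernel_coordKernel i).snd_mul_fderiv
    (EuclideanSpace.single k 1)).integrable_slice_mul hpq (by simpa using hn) (hf.eval_piLp k) hz
    z.1
  have hintegrand (y : Ed d) : ∑ j, pEntry d z.2 i j y * appendZero d f (z.1 - y) j =
      2 / sphereVol d * (rawPoissonKernel (y, z.2) * appendZero d f (z.1 - y) i -
        ∑ k, z.2 * fderiv ℝ (coordKernel d i) (y, z.2) (EuclideanSpace.single k 1, 0) *
          f (z.1 - y) k) := by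
    have hdiag : ∑ k : Fin d, (if i = k.castSucc then rawPoissonKernel (y, z.2) else 0) *
        f (z.1 - y) k = rawPoissonKernel (y, z.2) * appendZero d f (z.1 - y) i := by
      cases i using Fin.lastCases with
      | last => simp [appendZero_apply_last, (Fin.castSucc_lt_last _).ne']
      | cast j => simp [appendZero_apply_castSucc]
    rw [← hdiag, ← Finset.sum_sub_distrib, Finset.mul_sum, Fin.sum_univ_castSucc]
    simp only [appendZero_apply_last, mul_zero, add_zero, appendZero_apply_castSucc, pEntry_eq hz,
      sub_mul, mul_assoc]
  calc pConv d z.2 (appendZero d f) z.1 i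
      = ∫ y, ∑ j, pEntry d z.2 i j y * appendZero d f (z.1 - y) j := by
        simp [pConv]
    _ = _ := by
        simp only [hintegrand]
        rw [integral_const_mul, integral_sub hP (integrable_finsetSum _ fun k _ => hD k),
          integral_finsetSum _ fun k _ => hD k]
        simp only [scaledDivCoordConv, scaledDivConv, kernelConv_eq_integral_slice]

lemma differentiableAt_scaledDivCoordConv [Nontrivial (Ed d)] (hp : 1 < p)
    (hf : MemLp f (ENNReal.ofReal p)) {z : Ed d × ℝ} (hz : 0 < z.2) (i : Fin (d + 1)) :
    DifferentiableAt ℝ (scaledDivCoordConv f i) z :=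
  differentiableAt_scaledDivConv (isHomogeneousKernel_coordKernel i) (by simp) hp
    (fun k => hf.eval_piLp k) hz

lemma differentiableAt_poissonInt [Nontrivial (Ed d)] (hp : 1 < p) {m : ℕ} {F : Ed d → Ed m}
    (hF : ∀ i, MemLp (fun y => F y i) (ENNReal.ofReal p)) {z : Ed d × ℝ} (hz : 0 < z.2) :
    DifferentiableAt ℝ (fun w : Ed d × ℝ => poissonInt d m F w.1 w.2) z := by
  have hpq := Real.HolderConjugate.conjExponent hp
  refine differentiableAt_euclidean.2 fun i => ?_
  refine (((isHomogeneousKernel_rawPoissonKernel (Ed d)).differentiableAt_kernelConv hpq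
    (finrank_lt_mul le_rfl hpq.symm.lt) (hF i) hz).const_mul
      (2 / sphereVol d)).congr_of_eventuallyEq ?_
  filter_upwards [eventually_snd_pos hz] with w hw using poissonInt_apply hp hF hw i

lemma pConv_appendZero_apply_eq_sub [Nontrivial (Ed d)] (hp : 1 < p)
    (hf : MemLp f (ENNReal.ofReal p)) {z : Ed d × ℝ} (hz : 0 < z.2) (i : Fin (d + 1)) :
    pConv d z.2 (appendZero d f) z.1 i =
      poissonInt d (d + 1) (appendZero d f) z.1 z.2 i -
        2 / sphereVol d * scaledDivCoordConv f i z := by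
  rw [pConv_appendZero_apply hp hf hz, poissonInt_apply hp (memLp_appendZero_apply hf) hz, mul_sub]

lemma differentiableAt_pConv_appendZero [Nontrivial (Ed d)] (hp : 1 < p)
    (hf : MemLp f (ENNReal.ofReal p)) {z : Ed d × ℝ} (hz : 0 < z.2) :
    DifferentiableAt ℝ (fun w : Ed d × ℝ => pConv d w.2 (appendZero d f) w.1) z := by
  refine differentiableAt_euclidean.2 fun i => ?_
  have hu := differentiableAt_euclidean.1
    (differentiableAt_poissonInt hp (memLp_appendZero_apply hf) hz) i
  refine (hu.sub ((differentiableAt_scaledDivCoordConv hp hf hz i).const_mul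
    (2 / sphereVol d))).congr_of_eventuallyEq ?_
  filter_upwards [eventually_snd_pos hz] with w hw using pConv_appendZero_apply_eq_sub hp hf hw i

lemma fderiv_poissonInt_sub_fderiv_pConv_apply [Nontrivial (Ed d)] (hp : 1 < p)
    (hf : MemLp f (ENNReal.ofReal p)) {z : Ed d × ℝ} (hz : 0 < z.2) (e : Ed d × ℝ)
    (i : Fin (d + 1)) :
    (fderiv ℝ (fun w : Ed d × ℝ => poissonInt d (d + 1) (appendZero d f) w.1 w.2) z e -
        fderiv ℝ (fun w : Ed d × ℝ => pConv d w.2 (appendZero d f) w.1) z e) i =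
      2 / sphereVol d * fderiv ℝ (scaledDivCoordConv f i) z e := by
  have hu := differentiableAt_poissonInt hp (memLp_appendZero_apply hf) hz
  have hD := (differentiableAt_scaledDivCoordConv hp hf hz i).const_mul (2 / sphereVol d)
  have hU : (fun w : Ed d × ℝ => pConv d w.2 (appendZero d f) w.1 i) =ᶠ[𝓝 z] fun w =>
      poissonInt d (d + 1) (appendZero d f) w.1 w.2 i -
        2 / sphereVol d * scaledDivCoordConv f i w := by
    filter_upwards [eventually_snd_pos hz] with w hw using pConv_appendZero_apply_eq_sub hp hf hw i
  rw [PiLp.sub_apply, fderiv_euclidean_apply hu,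
    fderiv_euclidean_apply (differentiableAt_pConv_appendZero hp hf hz), hU.fderiv_eq,
    fderiv_fun_sub (differentiableAt_euclidean.1 hu i) hD, sub_apply, sub_sub_cancel,
    fderiv_const_mul (differentiableAt_scaledDivCoordConv hp hf hz i)]
  simp

lemma fderiv_poissonInt_appendZero_apply_last [Nontrivial (Ed d)] (hp : 1 < p)
    (hf : MemLp f (ENNReal.ofReal p)) {z : Ed d × ℝ} (hz : 0 < z.2) (e : Ed d × ℝ) :
    fderiv ℝ (fun w : Ed d × ℝ => poissonInt d (d + 1) (appendZero d f) w.1 w.2) z e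
      (Fin.last d) = 0 := by
  have hzero : (fun w : Ed d × ℝ => poissonInt d (d + 1) (appendZero d f) w.1 w.2 (Fin.last d))
      =ᶠ[𝓝 z] fun _ => 0 := by
    filter_upwards [eventually_snd_pos hz] with w hw
    rw [poissonInt_apply hp (memLp_appendZero_apply hf) hw]
    simp [appendZero_apply_last, kernelConv]
  rw [fderiv_euclidean_apply (differentiableAt_poissonInt hp (memLp_appendZero_apply hf) hz),
    hzero.fderiv_eq]
  simp

lemma exists_eLpNorm_fderiv_scaledDivCoordConv_le [Nontrivial (Ed d)] (hp : 1 < p) :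
    ∃ C : ℝ≥0, ∀ f : Ed d → Ed d, MemLp f (ENNReal.ofReal p) → ∀ t : ℝ, 0 < t →
      ∀ (e : Ed d × ℝ) (i : Fin (d + 1)),
        eLpNorm (fun x => fderiv ℝ (scaledDivCoordConv f i) (x, t) e) (ENNReal.ofReal p) ≤
          C * eLpNorm (fun x => fderiv ℝ (scaledDivCoordConv f (Fin.last d)) (x, t) e)
            (ENNReal.ofReal p) := by
  choose C hC using fun j : Fin d =>
    exists_eLpNorm_fderiv_scaledDivConv_le (ι := Fin d) hp (EuclideanSpace.single j (1 : ℝ))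
  refine ⟨1 + ∑ j, C j, fun f hf t ht e i => ?_⟩
  cases i using Fin.lastCases with
  | last => exact le_mul_of_one_le_left zero_le (by simp)
  | cast j =>
    have hCj : C j ≤ 1 + ∑ j, C j :=
      (Finset.single_le_sum (fun _ _ => zero_le) (Finset.mem_univ j)).trans le_add_self
    simp only [scaledDivCoordConv, coordKernel_castSucc, coordKernel_last]
    refine (hC j _ _ (fun k => hf.eval_piLp k) t ht e).trans ?_
    gcongr

lemma eLpNorm_fderiv_scaledDivCoordConv_last_le [Nontrivial (Ed d)] (hp : 1 < p)
    (hf : MemLp f (ENNReal.ofReal p)) {t : ℝ} (ht : 0 < t) (e : Ed d × ℝ) (r : ℝ≥0∞) :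
    eLpNorm (fun x => 2 / sphereVol d * fderiv ℝ (scaledDivCoordConv f (Fin.last d)) (x, t) e) r ≤
      eLpNorm (fun x => fderiv ℝ (fun w : Ed d × ℝ => pConv d w.2 (appendZero d f) w.1)
        (x, t) e) r := by
  refine eLpNorm_mono fun x => ?_
  rw [← fderiv_poissonInt_sub_fderiv_pConv_apply hp hf (z := (x, t)) ht e, PiLp.sub_apply,
    fderiv_poissonInt_appendZero_apply_last hp hf (z := (x, t)) ht, zero_sub, norm_neg]
  exact PiLp.norm_apply_le _ _

lemma exists_eLpNorm_fderiv_poissonInt_le [Nontrivial (Ed d)] (hp : 1 < p) :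
    ∃ C : ℝ, 0 < C ∧ ∀ f : Ed d → Ed d, MemLp f (ENNReal.ofReal p) → ∀ t : ℝ, 0 < t →
      ∀ e : Ed d × ℝ,
        eLpNorm (fun x => fderiv ℝ (fun w : Ed d × ℝ =>
            poissonInt d (d + 1) (appendZero d f) w.1 w.2) (x, t) e) (ENNReal.ofReal p) ≤
          ENNReal.ofReal C * eLpNorm (fun x => fderiv ℝ (fun w : Ed d × ℝ =>
            pConv d w.2 (appendZero d f) w.1) (x, t) e) (ENNReal.ofReal p) := by
  obtain ⟨C, hC⟩ := exists_eLpNorm_fderiv_scaledDivCoordConv_le (d := d) hp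
  refine ⟨(1 + Fintype.card (Fin (d + 1)) * C : ℝ≥0), by positivity, fun f hf t ht e => ?_⟩
  have hmeas (G : Ed d × ℝ → Ed (d + 1)) :
      AEStronglyMeasurable fun x : Ed d => fderiv ℝ G (x, t) e :=
    ((measurable_fderiv_apply_const ℝ G e).comp measurable_prodMk_right).aestronglyMeasurable
  rw [ENNReal.ofReal_coe_nnreal]
  refine eLpNorm_le_of_forall_eLpNorm_sub_apply_le (by simpa using hp.le) (hmeas _) (hmeas _)
    fun i => ?_
  simp only [fun x => fderiv_poissonInt_sub_fderiv_pConv_apply hp hf (z := (x, t)) ht e i,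
    eLpNorm_const_mul]
  grw [hC f hf t ht e i, mul_left_comm, ← eLpNorm_const_mul,
    eLpNorm_fderiv_scaledDivCoordConv_last_le hp hf ht]

end PoissonIntegrals

lemma poissonInt_appendZero_of_subsingleton {d : ℕ} [Subsingleton (Ed d)] (f : Ed d → Ed d)
    (x : Ed d) (t : ℝ) : poissonInt d (d + 1) (appendZero d f) x t = 0 := by
  have hF : appendZero d f = 0 := by
    ext y i
    cases i using Fin.lastCases with
    | last => simp [appendZero_apply_last]
    | cast j => simp [appendZero_apply_castSucc, Subsingleton.elim (f y) 0]
  simp [poissonInt, hF]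

/-- **Comparison of derivatives of the Poisson integral and of the Poisson-type integral.**
Let `1 < p < ∞`, `f ∈ L^p(ℝ^d;ℝ^d)`, `F = (f,0)`, `u(x,t) = (p_t ∗ F)(x)` and
`U(x,t) = (ℙ_t ∗ F)(x)`. There is `C = C(d,p) > 0` such that for every `t > 0`,
`‖∂_t u(·,t)‖_{L^p} ≤ C ‖∂_t U(·,t)‖_{L^p}` and, for each `k = 1,…,d`,
`‖∂_{x_k} u(·,t)‖_{L^p} ≤ C ‖∂_{x_k} U(·,t)‖_{L^p}`. -/
theorem poisson_vs_pConv_derivatives (d : ℕ) (p : ℝ) (hp : 1 < p) :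
    ∃ C : ℝ, 0 < C ∧
      ∀ f : Ed d → Ed d, MemLp f (ENNReal.ofReal p) volume →
        ∀ t : ℝ, 0 < t →
          (eLpNorm (fun x => deriv (fun τ => poissonInt d (d + 1) (appendZero d f) x τ) t)
              (ENNReal.ofReal p) volume ≤
            ENNReal.ofReal C *
              eLpNorm (fun x => deriv (fun τ => pConv d τ (appendZero d f) x) t)
                (ENNReal.ofReal p) volume) ∧
          ∀ k : Fin d,
            eLpNorm (fun x => fderiv ℝ (fun z => poissonInt d (d + 1) (appendZero d f) z t) x
                (EuclideanSpace.single k 1))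
              (ENNReal.ofReal p) volume ≤
              ENNReal.ofReal C *
                eLpNorm (fun x => fderiv ℝ (fun z => pConv d t (appendZero d f) z) x
                    (EuclideanSpace.single k 1))
                  (ENNReal.ofReal p) volume := by
  rcases subsingleton_or_nontrivial (Ed d) with _ | _
  · refine ⟨1, one_pos, fun f _ t _ => ?_⟩
    have hu (x : Ed d) (t : ℝ) : poissonInt d (d + 1) (appendZero d f) x t = 0 :=
      poissonInt_appendZero_of_subsingleton f x t
    simp [hu]
  obtain ⟨C, hC_pos, hC⟩ := exists_eLpNorm_fderiv_poissonInt_le (d := d) hp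
  refine ⟨C, hC_pos, fun f hf t ht => ?_⟩
  have hu (x : Ed d) := differentiableAt_poissonInt hp (memLp_appendZero_apply hf) (z := (x, t)) ht
  have hU (x : Ed d) := differentiableAt_pConv_appendZero hp hf (z := (x, t)) ht
  refine ⟨?_, fun k => ?_⟩
  · simpa only [(hasDerivAt_vertical (hu _)).deriv, (hasDerivAt_vertical (hU _)).deriv] using
      hC f hf t ht (0, 1)
  · simpa only [fderiv_horizontal (hu _), fderiv_horizontal (hU _)] using
      hC f hf t ht (EuclideanSpace.single k 1, 0)
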